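/- arXiv:1307.4394 — 7 statements merged into one kernel-verified Lean document; each statement's English description precedes it below -/
import Mathlib

section
/- Let X_1, …, X_t be random variables on a probability space (Ω, P) with values in (0,1] such that P(X_i ≤ u) ≤ u for every i = 1, …, t and every u ∈ (0,1). Let m ≤ t and let 0 = c_0 ≤ c_1 ≤ ⋯ ≤ c_m ≤ 1. Then P( ⋃_{i=1}^{m} {X_(i) ≤ c_i} ) ≤ t · Σ_{i=1}^{m} (c_i − c_{i−1})/i, where X_(i) denotes the i-th smallest of X_1, …, X_t. -/
/-!
Write `N j` for the number of `i` with `X i ≤ c j`, and let `w` be the nonnegative weights on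
`1, …, m` whose tails are `∑_{j ≥ k} w j = 1 / k`. If `k ≤ N k` for some `k`, then
`∑ j, w j * N j ≥ k * ∑_{j ≥ k} w j = 1`, because `N` is monotone in `j`. Markov's inequality
therefore bounds the probability of the union by
`∑ j, w j * ∑ i, P (X i ≤ c j) ≤ t * ∑ j, w j * c j`, and summation by parts turns the last sum
into `∑ j, (c j - c (j - 1)) / j`.

The `X i` are not assumed measurable, so `P` is used as an outer measure; Markov's inequality
survives (`measure_le_sum_weights`) on replacing each event by a measurable hull.
-/

open MeasureTheory

noncomputable section

namespace GenError

variable {Ω : Type*}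

/-- The number of indices `i ∈ s` whose p-value at `ω` is at most `x`
(used to express order statistics: the `k`-th smallest of the `PV i`, `i ∈ s`,
is `≤ x` iff `k ≤ numLe s PV x ω`). -/
def numLe (s : Finset ℕ) (PV : ℕ → Ω → ℝ) (x : ℝ) (ω : Ω) : ℕ :=
  (s.filter fun i => PV i ω ≤ x).card

/-- Number of rejections of the step-up procedure with critical constants `c` on
hypotheses `1, …, n`: `max {i : PV_(i) ≤ c i}` (and `0` if no such `i` exists). -/
def numRejSU (n : ℕ) (PV : ℕ → Ω → ℝ) (c : ℕ → ℝ) (ω : Ω) : ℕ :=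
  ((Finset.Icc 1 n).filter fun i => i ≤ numLe (Finset.Icc 1 n) PV (c i) ω).sup id

open scoped Classical in
/-- Number of rejections of the step-down procedure with critical constants `c` on
hypotheses `1, …, n`: `max {i : ∀ j ≤ i, PV_(j) ≤ c j}` (and `0` if `PV_(1) > c 1`). -/
def numRejSD (n : ℕ) (PV : ℕ → Ω → ℝ) (c : ℕ → ℝ) (ω : Ω) : ℕ :=
  ((Finset.Icc 1 n).filter fun i =>
      ∀ j ∈ Finset.Icc 1 i, j ≤ numLe (Finset.Icc 1 n) PV (c j) ω).sup id

/-- Number of rejected true hypotheses when `R` hypotheses are rejected by a stepwise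
procedure with nondecreasing critical constants `c` (the rejected hypotheses, i.e. those
attaining the `R` smallest p-values, are exactly those with p-value `≤ c R`). -/
def numFalse (PV : ℕ → Ω → ℝ) (c : ℕ → ℝ) (I : Finset ℕ) (R : ℕ) (ω : Ω) : ℕ :=
  if R = 0 then 0 else (I.filter fun i => PV i ω ≤ c R).card

/-- `V` for the step-up procedure. -/
def VSU (n : ℕ) (PV : ℕ → Ω → ℝ) (c : ℕ → ℝ) (I : Finset ℕ) (ω : Ω) : ℕ :=
  numFalse PV c I (numRejSU n PV c ω) ω

/-- `V` for the step-down procedure. -/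
def VSD (n : ℕ) (PV : ℕ → Ω → ℝ) (c : ℕ → ℝ) (I : Finset ℕ) (ω : Ω) : ℕ :=
  numFalse PV c I (numRejSD n PV c ω) ω

/-- False discovery proportion of the step-up procedure: `V/R` if `R > 0`, else `0`. -/
def FDPSU (n : ℕ) (PV : ℕ → Ω → ℝ) (c : ℕ → ℝ) (I : Finset ℕ) (ω : Ω) : ℝ :=
  if numRejSU n PV c ω = 0 then 0
  else (VSU n PV c I ω : ℝ) / (numRejSU n PV c ω : ℝ)

/-- False discovery proportion of the step-down procedure: `V/R` if `R > 0`, else `0`. -/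
def FDPSD (n : ℕ) (PV : ℕ → Ω → ℝ) (c : ℕ → ℝ) (I : Finset ℕ) (ω : Ω) : ℝ :=
  if numRejSD n PV c ω = 0 then 0
  else (VSD n PV c I ω : ℝ) / (numRejSD n PV c ω : ℝ)

/-- The matrix `A^{kFWER-SU}(k)` (rows/columns indexed by `1, …, n`). -/
def AkSU (n k i j : ℕ) : ℝ :=
  if i < k then 0
  else if j < n + k - i then 0
  else if j < n then (i : ℝ) * (1 / ((j + i - n : ℕ) : ℝ) - 1 / (((j + i - n : ℕ) : ℝ) + 1))
  else if j = n then 1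
  else 0

/-- The matrix `A^{kFWER-SD}(k)` (rows/columns indexed by `1, …, n`). -/
def AkSD (n k i j : ℕ) : ℝ :=
  if k ≤ i ∧ j = n - i + k then (i : ℝ) / (k : ℝ) else 0

/-- `m(j) = ⌊γ j⌋ + 1`. -/
def mfl (γ : ℝ) (j : ℕ) : ℕ := (⌊γ * (j : ℝ)⌋).toNat + 1

/-- `M̃(i) = max {l ∈ {1,…,n} : m(l) ≤ i}`. -/
def Mt (γ : ℝ) (n i : ℕ) : ℕ :=
  ((Finset.Icc 1 n).filter fun l => mfl γ l ≤ i).sup id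

/-- `g_i(l) = max (i - n + l, m(l))`. -/
def gg (γ : ℝ) (n i l : ℕ) : ℕ := max (i + l - n) (mfl γ l)

/-- `M(i) = g_i(M̃(i))`. -/
def MM (γ : ℝ) (n i : ℕ) : ℕ := gg γ n i (Mt γ n i)

/-- `t_k(i) = max {l ∈ {1,…,M̃(i)} : g_i(l) = k}`. -/
def tt (γ : ℝ) (n i k : ℕ) : ℕ :=
  ((Finset.Icc 1 (Mt γ n i)).filter fun l => gg γ n i l = k).sup id

/-- The matrix `A^{FDP-SU}(γ)`: the entry in column `j = t_k(i)` for `1 ≤ k < M(i)` is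
`i (1/k - 1/(k+1))` (such a `k` necessarily equals `g_i(j)`), the entry in column
`j = t_{M(i)}(i)` is `i / M(i)`, and all other entries vanish. -/
def AFDPSU (γ : ℝ) (n i j : ℕ) : ℝ :=
  if j = tt γ n i (MM γ n i) then (i : ℝ) / (MM γ n i : ℝ)
  else if 1 ≤ gg γ n i j ∧ gg γ n i j < MM γ n i ∧ j = tt γ n i (gg γ n i j) then
    (i : ℝ) * (1 / (gg γ n i j : ℝ) - 1 / ((gg γ n i j : ℝ) + 1))
  else 0

/-- `k_i(l) = min (n, n + l - i, ⌈l/γ⌉ - 1)`. -/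
def kk (γ : ℝ) (n i l : ℕ) : ℕ :=
  min n (min (n + l - i) ((⌈(l : ℝ) / γ⌉).toNat - 1))

/-- `N(i) = min (⌊γ n⌋ + 1, i, ⌊γ ((n - i)/(1 - γ) + 1)⌋ + 1)`. -/
def NN (γ : ℝ) (n i : ℕ) : ℕ :=
  min ((⌊γ * (n : ℝ)⌋).toNat + 1)
    (min i ((⌊γ * ((((n : ℝ) - (i : ℝ)) / (1 - γ)) + 1)⌋).toNat + 1))

/-- The matrix `Ã` for the step-down FDP bound. -/
def Atilde (γ : ℝ) (n i j : ℕ) : ℝ :=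
  if 1 ≤ j ∧ j < NN γ n i then (i : ℝ) * (1 / (j : ℝ) - 1 / ((j : ℝ) + 1))
  else if j = NN γ n i then (i : ℝ) / (NN γ n i : ℝ)
  else 0

/-- The matrix `A^{FDP-SD}(γ)`: `A i j = ∑_{l : k_i(l) = j} Ã i l` when `j` is in the image
`M(i)` of `k_i`, and `0` otherwise (the sum over the empty fibre being `0`). -/
def AFDPSD (γ : ℝ) (n i j : ℕ) : ℝ :=
  ∑ l ∈ (Finset.Icc 1 ((⌊γ * (n : ℝ)⌋).toNat + 1)).filter (fun l => kk γ n i l = j),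
    Atilde γ n i l

/-- The vector `β(i)` built from constants `c` for the step-down FDP bound:
`β_l(i) = c (k_i(l))` for `1 ≤ l ≤ ⌊γ n⌋ + 1`, and `0` otherwise. -/
def betaVec (γ : ℝ) (n i : ℕ) (c : ℕ → ℝ) (l : ℕ) : ℝ :=
  if 1 ≤ l ∧ l ≤ (⌊γ * (n : ℝ)⌋).toNat + 1 then c (kk γ n i l) else 0

/-- `β_l(i) = c (k_i(l))`, with the convention `β_0(i) = 0`. -/
def betaSD (γ : ℝ) (n i : ℕ) (c : ℕ → ℝ) (l : ℕ) : ℝ :=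
  if l = 0 then 0 else c (kk γ n i l)

/-- `c (t_k(i))`, with the convention that the value at `k = 0` is `0`. -/
def cT (γ : ℝ) (n i : ℕ) (c : ℕ → ℝ) (k : ℕ) : ℝ :=
  if k = 0 then 0 else c (tt γ n i k)

/-- The Lehmann–Romano constants `d^{LR}_j = k/(n + k - j)`. -/
def dLR (n k j : ℕ) : ℝ := (k : ℝ) / ((n + k - j : ℕ) : ℝ)

/-- The weights on `{1, …, m}` with tail sums `∑_{j = k}^m w j = 1 / k`: the increment
`1 / j - 1 / (j + 1)` for `j < m`, and `1 / m` for `j = m`. -/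
def tailWeight (m j : ℕ) : ℝ :=
  1 / ((j : ℝ) * (j + 1)) + if j = m then 1 / ((m : ℝ) + 1) else 0

lemma tailWeight_nonneg (m j : ℕ) : 0 ≤ tailWeight m j := by
  unfold tailWeight
  split_ifs <;> positivity

lemma sum_tailWeight {k m : ℕ} (hk : 1 ≤ k) (hkm : k ≤ m) :
    ∑ j ∈ Finset.Icc k m, tailWeight m j = 1 / (k : ℝ) := by
  have key : ∑ j ∈ Finset.Icc k m, 1 / ((j : ℝ) * (j + 1)) + 1 / ((m : ℝ) + 1) = 1 / (k : ℝ) := by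
    have hk0 : (k : ℝ) ≠ 0 := by positivity
    induction m, hkm using Nat.le_induction with
    | base =>
      rw [Finset.Icc_self, Finset.sum_singleton]
      field_simp
      ring
    | succ n hn ih =>
      rw [Finset.sum_Icc_succ_top (by omega), ← ih]
      push_cast
      field_simp
      ring
  simp only [tailWeight, Finset.sum_add_distrib, Finset.sum_ite_eq', Finset.mem_Icc, hkm, le_refl,
    and_self, if_true]
  exact key

/-- Summation by parts against `tailWeight`. -/
lemma sum_tailWeight_mul (a : ℕ → ℝ) (ha : a 0 = 0) (m : ℕ) :
    ∑ j ∈ Finset.Icc 1 m, tailWeight m j * a j =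
      ∑ j ∈ Finset.Icc 1 m, (a j - a (j - 1)) / (j : ℝ) := by
  rcases Nat.eq_zero_or_pos m with rfl | hm
  · simp
  have key : ∀ n : ℕ, ∑ j ∈ Finset.Icc 1 n, 1 / ((j : ℝ) * (j + 1)) * a j + 1 / ((n : ℝ) + 1) * a n
      = ∑ j ∈ Finset.Icc 1 n, (a j - a (j - 1)) / (j : ℝ) := by
    intro n
    induction n with
    | zero => simp [ha]
    | succ n ih =>
      rw [Finset.sum_Icc_succ_top (by omega), Finset.sum_Icc_succ_top (by omega), ← ih]
      push_cast
      field_simp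
      ring
  rw [← key m]
  simp only [tailWeight, add_mul, ite_mul, zero_mul, Finset.sum_add_distrib, Finset.sum_ite_eq',
    Finset.mem_Icc, show 1 ≤ m from hm, le_refl, and_self, if_true]

open scoped Classical in
/-- Markov's inequality for a weighted count of the events `B j`, which need not be measurable. -/
lemma measure_le_sum_weights {Ω ι : Type*} [MeasurableSpace Ω] (P : Measure Ω) (J : Finset ι)
    (B : ι → Set Ω) (w : ι → ℝ) (hw : ∀ j ∈ J, 0 ≤ w j) (E : Set Ω)
    (hE : ∀ ω ∈ E, 1 ≤ ∑ j ∈ J, if ω ∈ B j then w j else 0) :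
    P E ≤ ∑ j ∈ J, ENNReal.ofReal (w j) * P (B j) := by
  set g : Ω → ENNReal := fun ω =>
    ∑ j ∈ J, (toMeasurable P (B j)).indicator (fun _ => ENNReal.ofReal (w j)) ω with hg
  have hsub : E ⊆ {ω | 1 ≤ g ω} := by
    intro ω hω
    have h1 := ENNReal.ofReal_le_ofReal (hE ω hω)
    rw [ENNReal.ofReal_one, ENNReal.ofReal_sum_of_nonneg
      (fun j hj => by split_ifs; exacts [hw j hj, le_rfl])] at h1
    refine h1.trans (Finset.sum_le_sum fun j _ => ?_)
    split_ifs with h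
    · rw [Set.indicator_of_mem (subset_toMeasurable P _ h)]
    · simp
  calc P E ≤ P {ω | 1 ≤ g ω} := measure_mono hsub
    _ ≤ ∫⁻ ω, g ω ∂P := by
        simpa using mul_meas_ge_le_lintegral (μ := P) (f := g)
          (Finset.measurable_fun_sum _ fun j _ =>
            measurable_const.indicator (measurableSet_toMeasurable P _)) 1
    _ = ∑ j ∈ J, ENNReal.ofReal (w j) * P (B j) := by
        rw [hg, lintegral_finsetSum _ fun j _ =>
          measurable_const.indicator (measurableSet_toMeasurable P _)]
        refine Finset.sum_congr rfl fun j _ => ?_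
        rw [lintegral_indicator_const (measurableSet_toMeasurable P _), measure_toMeasurable]

/-- the generalised Bonferroni inequality of Lehmann and Romano. -/
theorem statement0 {Ω : Type*} [MeasurableSpace Ω] (P : Measure Ω) [IsProbabilityMeasure P]
    (t m : ℕ) (ht : 1 ≤ t) (hm : m ≤ t)
    (X : ℕ → Ω → ℝ)
    (hX : ∀ i ∈ Finset.Icc 1 t, ∀ ω, X i ω ∈ Set.Ioc (0 : ℝ) 1)
    (hU : ∀ i ∈ Finset.Icc 1 t, ∀ u ∈ Set.Ioo (0 : ℝ) 1,
      P {ω | X i ω ≤ u} ≤ ENNReal.ofReal u)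
    (c : ℕ → ℝ) (hc0 : c 0 = 0)
    (hcmono : ∀ i ∈ Finset.Icc 1 m, c (i - 1) ≤ c i) (hc1 : c m ≤ 1) :
    P (⋃ i ∈ Finset.Icc 1 m, {ω | i ≤ numLe (Finset.Icc 1 t) X (c i) ω}) ≤
      ENNReal.ofReal ((t : ℝ) * ∑ i ∈ Finset.Icc 1 m, (c i - c (i - 1)) / (i : ℝ)) := by
  have hcm : ∀ i j, i ≤ j → j ≤ m → c i ≤ c j := by
    intro i j hij
    induction j, hij using Nat.le_induction with
    | base => exact fun _ => le_rfl
    | succ n hn ih =>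
      intro h
      exact (ih (by omega)).trans (by simpa using hcmono (n + 1) (by simp; omega))
  have hc_nonneg : ∀ j, j ≤ m → 0 ≤ c j := fun j hj => hc0 ▸ hcm 0 j (Nat.zero_le _) hj
  have hP : ∀ i ∈ Finset.Icc 1 t, ∀ j ≤ m, P {ω | X i ω ≤ c j} ≤ ENNReal.ofReal (c j) := by
    intro i hi j hj
    rcases (hc_nonneg j hj).eq_or_lt with h0 | h0
    · -- the hypothesis on `X i` excludes `u = 0`, but `X i` is positive
      have : {ω | X i ω ≤ c j} = ∅ := by
        ext ω
        simpa [← h0] using (hX i hi ω).1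
      simp [this]
    rcases ((hcm j m hj le_rfl).trans hc1).eq_or_lt with h1 | h1
    · rw [h1, ENNReal.ofReal_one]
      exact prob_le_one
    · exact hU i hi _ ⟨h0, h1⟩
  classical
  refine (measure_le_sum_weights P (Finset.Icc 1 m ×ˢ Finset.Icc 1 t)
    (fun p => {ω | X p.2 ω ≤ c p.1}) (fun p => tailWeight m p.1)
    (fun p _ => tailWeight_nonneg m p.1) _ ?_).trans ?_
  · intro ω hω
    simp only [Set.mem_iUnion, Set.mem_ofPred_eq, Finset.mem_Icc] at hω
    obtain ⟨k, ⟨hk1, hkm⟩, hk⟩ := hω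
    have hcount : ∀ j ∈ Finset.Icc 1 m, (∑ i ∈ Finset.Icc 1 t,
        if ω ∈ {ω | X i ω ≤ c j} then tailWeight m j else 0) =
        tailWeight m j * (numLe (Finset.Icc 1 t) X (c j) ω : ℝ) := by
      intro j _
      simp only [Set.mem_ofPred_eq]
      rw [← Finset.sum_filter, Finset.sum_const, nsmul_eq_mul, mul_comm, numLe]
    rw [Finset.sum_product, Finset.sum_congr rfl hcount]
    calc (1 : ℝ) = ∑ j ∈ Finset.Icc k m, tailWeight m j * (k : ℝ) := by
          rw [← Finset.sum_mul, sum_tailWeight hk1 hkm]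
          field_simp
      _ ≤ ∑ j ∈ Finset.Icc k m,
            tailWeight m j * (numLe (Finset.Icc 1 t) X (c j) ω : ℝ) := by
          refine Finset.sum_le_sum fun j hj => ?_
          rw [Finset.mem_Icc] at hj
          refine mul_le_mul_of_nonneg_left ?_ (tailWeight_nonneg m j)
          exact_mod_cast hk.trans (Finset.card_le_card
            (Finset.monotone_filter_right _ fun i _ hi => hi.trans (hcm k j hj.1 hj.2)))
      _ ≤ _ := Finset.sum_le_sum_of_subset_of_nonneg (Finset.Icc_subset_Icc_left hk1)
          fun j _ _ => mul_nonneg (tailWeight_nonneg m j) (Nat.cast_nonneg _)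
  · calc _ ≤ ∑ p ∈ Finset.Icc 1 m ×ˢ Finset.Icc 1 t,
            ENNReal.ofReal (tailWeight m p.1 * c p.1) := by
          refine Finset.sum_le_sum fun p hp => ?_
          rw [Finset.mem_product] at hp
          rw [ENNReal.ofReal_mul (tailWeight_nonneg m p.1)]
          gcongr
          exact hP p.2 hp.2 p.1 (Finset.mem_Icc.1 hp.1).2
      _ = ENNReal.ofReal (∑ p ∈ Finset.Icc 1 m ×ˢ Finset.Icc 1 t, tailWeight m p.1 * c p.1) :=
          (ENNReal.ofReal_sum_of_nonneg fun p hp => mul_nonneg (tailWeight_nonneg m p.1)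
            (hc_nonneg _ (Finset.mem_Icc.1 (Finset.mem_product.1 hp).1).2)).symm
      _ = _ := by
          rw [Finset.sum_product, ← sum_tailWeight_mul c hc0 m, Finset.mul_sum]
          simp

end GenError

end
end

section
/- Let t ≥ 1, m ≤ t and 0 = c_0 ≤ c_1 ≤ ⋯ ≤ c_m ≤ 1 be such that t · Σ_{i=1}^{m} (c_i − c_{i−1})/i ≤ 1. Then there exist a probability space (Ω, P) and random variables X_1, …, X_t with values in (0,1] satisfying P(X_i ≤ u) ≤ u for every i and every u ∈ (0,1), for which P( ⋃_{i=1}^{m} {X_(i) ≤ c_i} ) = t · Σ_{i=1}^{m} (c_i − c_{i−1})/i, where X_(i) denotes the i-th smallest of X_1, …, X_t. -/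
/-!
The sharp example is purely atomic. Draw a level `i ∈ {1, …, m}` with probability
`t (c i - c (i - 1)) / i` (no level with the remaining probability) and, independently, a uniform
shift `j < t`. The `i` variables in the cyclic window of length `i` determined by `j` take the
value `c i`, and all others the value `1`. On level `i` at least `i` variables are `≤ c i`, so the
union occurs. Each variable lies in the window with conditional probability `i / t`
(`card_Ico_add_mod_lt`), so it equals `c i` at level `i` with probability `c i - c (i - 1)`; by
telescoping (`sum_increments_le`) this gives `P (X k ≤ u) ≤ u` for `u < 1`. If no level is drawn,
all variables are `1` and the union fails as long as `c m < 1`; if `c m = 1` the bound is already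
`1` (`one_le_bound`) and a level is drawn almost surely.
-/

open MeasureTheory

noncomputable section

namespace GenError

variable {Ω : Type*}

/-- Among any `t` consecutive integers, exactly `i` have residue `< i` modulo `t`. -/
theorem card_Ico_mod_lt {t i : ℕ} (hi : i ≤ t) (a : ℕ) :
    ((Finset.Ico a (a + t)).filter fun x => x % t < i).card = i := by
  rw [Nat.filter_Ico_card_eq_of_periodic a t (fun x => x % t < i)
    (fun x => by simp [Nat.add_mod_right])]
  rw [Nat.count_eq_card_filter_range]
  have : (Finset.range t).filter (fun x => x % t < i) = Finset.range i := by
    ext x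
    simp only [Finset.mem_filter, Finset.mem_range]
    constructor
    · rintro ⟨h1, h2⟩
      rwa [Nat.mod_eq_of_lt h1] at h2
    · intro h
      have h1 : x < t := h.trans_le hi
      exact ⟨h1, by rwa [Nat.mod_eq_of_lt h1]⟩
  rw [this, Finset.card_range]

theorem card_Ico_add_mod_lt {t i : ℕ} (hi : i ≤ t) (a k : ℕ) :
    ((Finset.Ico a (a + t)).filter fun x => (k + x) % t < i).card = i := by
  have h := card_Ico_mod_lt hi (k + a)
  rw [add_assoc, ← Finset.image_add_left_Ico, Finset.filter_image,
    Finset.card_image_of_injective _ (add_right_injective k)] at h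
  exact h

/-- The atomic law putting mass `c i - c (i - 1)` on `c i` has distribution function `≤ u`. -/
theorem sum_increments_le {m : ℕ} {c : ℕ → ℝ} (hc0 : c 0 = 0)
    (hcmono : ∀ i ∈ Finset.Icc 1 m, c (i - 1) ≤ c i) {u : ℝ} (hu : 0 ≤ u) :
    ∑ i ∈ Finset.Icc 1 m, (if c i ≤ u then c i - c (i - 1) else 0) ≤ u := by
  suffices H : ∀ n ≤ m,
      ∑ i ∈ Finset.Icc 1 n, (if c i ≤ u then c i - c (i - 1) else 0) ≤ c n ∧
      ∑ i ∈ Finset.Icc 1 n, (if c i ≤ u then c i - c (i - 1) else 0) ≤ u from (H m le_rfl).2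
  intro n
  induction n with
  | zero => intro _; simp [hc0, hu]
  | succ n ih =>
    intro hn
    obtain ⟨h1, h2⟩ := ih (by omega)
    have h3 := hcmono (n + 1) (Finset.mem_Icc.2 ⟨by omega, hn⟩)
    rw [Finset.sum_Icc_succ_top (by omega)]
    simp only [Nat.add_sub_cancel] at h3 ⊢
    split_ifs with h
    · constructor <;> linarith
    · constructor <;> linarith

theorem sum_increments_eq {c : ℕ → ℝ} (hc0 : c 0 = 0) (m : ℕ) :
    ∑ i ∈ Finset.Icc 1 m, (c i - c (i - 1)) = c m := by
  induction m with
  | zero => simp [hc0]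
  | succ n ih => rw [Finset.sum_Icc_succ_top (by omega), ih]; simp

theorem le_of_increments {m : ℕ} {c : ℕ → ℝ}
    (hcmono : ∀ i ∈ Finset.Icc 1 m, c (i - 1) ≤ c i) {i j : ℕ} (hij : i ≤ j) (hj : j ≤ m) :
    c i ≤ c j := by
  induction j, hij using Nat.le_induction with
  | base => exact le_rfl
  | succ n hn ih =>
    exact (ih (by omega)).trans (by simpa using hcmono (n + 1) (Finset.mem_Icc.2 ⟨by omega, hj⟩))

/-- If `c m = 1`, the bound is at least `1`, so no mass remains outside the levels `1, …, m`. -/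
theorem one_le_bound {t m : ℕ} (ht : 1 ≤ t) (hm : m ≤ t) {c : ℕ → ℝ} (hc0 : c 0 = 0)
    (hcmono : ∀ i ∈ Finset.Icc 1 m, c (i - 1) ≤ c i) (h : c m = 1) :
    1 ≤ (t : ℝ) * ∑ i ∈ Finset.Icc 1 m, (c i - c (i - 1)) / (i : ℝ) := by
  have ht' : (0 : ℝ) < t := by exact_mod_cast ht
  rw [← h, ← sum_increments_eq hc0 m, Finset.mul_sum]
  refine Finset.sum_le_sum fun i hi => ?_
  have h0 := hcmono i hi
  rw [Finset.mem_Icc] at hi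
  have hi0 : (0 : ℝ) < i := by exact_mod_cast hi.1
  have hit : (i : ℝ) ≤ t := by exact_mod_cast hi.2.trans hm
  rw [← mul_div_assoc, le_div_iff₀ hi0, mul_comm]
  exact mul_le_mul_of_nonneg_right hit (by linarith)

/-- The law on pairs (level, shift): the pair `(i, j)` with `1 ≤ i ≤ m` and `j < t` has mass
`(c i - c (i - 1)) / i`, and the remaining mass sits at `(0, 0)`. -/
def sharpLaw (t m : ℕ) (c : ℕ → ℝ) : Measure (ℕ × ℕ) :=
  (∑ i ∈ Finset.Icc 1 m, ∑ j ∈ Finset.range t,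
    ENNReal.ofReal ((c i - c (i - 1)) / (i : ℝ)) • Measure.dirac (i, j)) +
  ENNReal.ofReal (1 - (t : ℝ) * ∑ i ∈ Finset.Icc 1 m, (c i - c (i - 1)) / (i : ℝ)) •
    Measure.dirac (0, 0)

/-- At `(i, j)`, the `i` variables whose index `k` satisfies `(k + j) % t < i` take the value
`c i`, the others the value `1`. On a level with `c i ≤ 0`, which `sharpLaw` does not charge, all
variables equal `1` so as to remain positive. At level `0` all variables equal `1`. -/
def sharpVar (t : ℕ) (c : ℕ → ℝ) (k : ℕ) (ω : ℕ × ℕ) : ℝ :=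
  if 0 < c ω.1 ∧ (k + ω.2) % t < ω.1 then c ω.1 else 1

open scoped Classical in
theorem sharpLaw_apply (t m : ℕ) (c : ℕ → ℝ) (S : Set (ℕ × ℕ)) :
    sharpLaw t m c S =
      (∑ i ∈ Finset.Icc 1 m, ∑ j ∈ Finset.range t,
        if (i, j) ∈ S then ENNReal.ofReal ((c i - c (i - 1)) / (i : ℝ)) else 0) +
      if ((0, 0) : ℕ × ℕ) ∈ S then
        ENNReal.ofReal (1 - (t : ℝ) * ∑ i ∈ Finset.Icc 1 m, (c i - c (i - 1)) / (i : ℝ))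
      else 0 := by
  simp [sharpLaw, Set.indicator_apply]

theorem sum_levels {t m : ℕ} {c : ℕ → ℝ}
    (hcmono : ∀ i ∈ Finset.Icc 1 m, c (i - 1) ≤ c i) :
    ∑ i ∈ Finset.Icc 1 m, ∑ _j ∈ Finset.range t,
        ENNReal.ofReal ((c i - c (i - 1)) / (i : ℝ)) =
      ENNReal.ofReal ((t : ℝ) * ∑ i ∈ Finset.Icc 1 m, (c i - c (i - 1)) / (i : ℝ)) := by
  have hnn : ∀ i ∈ Finset.Icc 1 m, 0 ≤ (c i - c (i - 1)) / (i : ℝ) := fun i hi =>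
    div_nonneg (sub_nonneg.2 (hcmono i hi)) (Nat.cast_nonneg _)
  rw [ENNReal.ofReal_mul (Nat.cast_nonneg _), ENNReal.ofReal_sum_of_nonneg hnn, Finset.mul_sum]
  simp

/-- sharpness of the generalised Bonferroni inequality. -/
theorem statement1 (t m : ℕ) (ht : 1 ≤ t) (hm : m ≤ t)
    (c : ℕ → ℝ) (hc0 : c 0 = 0)
    (hcmono : ∀ i ∈ Finset.Icc 1 m, c (i - 1) ≤ c i) (hc1 : c m ≤ 1)
    (hbound : (t : ℝ) * ∑ i ∈ Finset.Icc 1 m, (c i - c (i - 1)) / (i : ℝ) ≤ 1) :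
    ∃ (Ω : Type) (mΩ : MeasurableSpace Ω) (P : Measure Ω),
      IsProbabilityMeasure P ∧
      ∃ X : ℕ → Ω → ℝ,
        (∀ i ∈ Finset.Icc 1 t, ∀ ω, X i ω ∈ Set.Ioc (0 : ℝ) 1) ∧
        (∀ i ∈ Finset.Icc 1 t, ∀ u ∈ Set.Ioo (0 : ℝ) 1,
          P {ω | X i ω ≤ u} ≤ ENNReal.ofReal u) ∧
        P (⋃ i ∈ Finset.Icc 1 m, {ω | i ≤ numLe (Finset.Icc 1 t) X (c i) ω}) =
          ENNReal.ofReal ((t : ℝ) * ∑ i ∈ Finset.Icc 1 m, (c i - c (i - 1)) / (i : ℝ)) := by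
  classical
  have hle1 : ∀ i, i ≤ m → c i ≤ 1 := fun i hi => (le_of_increments hcmono hi le_rfl).trans hc1
  have hnn : ∀ i ∈ Finset.Icc 1 m, 0 ≤ (c i - c (i - 1)) / (i : ℝ) := fun i hi =>
    div_nonneg (sub_nonneg.2 (hcmono i hi)) (Nat.cast_nonneg _)
  have hq0 : 0 ≤ (t : ℝ) * ∑ i ∈ Finset.Icc 1 m, (c i - c (i - 1)) / (i : ℝ) :=
    mul_nonneg (Nat.cast_nonneg _) (Finset.sum_nonneg hnn)
  -- Levels above `m` are null, but `c` is arbitrary there; replacing it by `1` keeps the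
  -- variables in `(0, 1]` at every point.
  let c' : ℕ → ℝ := fun i => if i ≤ m then c i else 1
  have hc' : ∀ i ≤ m, c' i = c i := fun i hi => if_pos hi
  have hc'1 : ∀ i, c' i ≤ 1 := by
    intro i
    by_cases h : i ≤ m
    · rw [hc' i h]; exact hle1 i h
    · simp [c', h]
  refine ⟨ℕ × ℕ, inferInstance, sharpLaw t m c, ⟨?_⟩, sharpVar t c', ?_, ?_, ?_⟩
  · rw [sharpLaw_apply]
    simp only [Set.mem_univ, if_true]
    rw [sum_levels hcmono, ← ENNReal.ofReal_add hq0 (by linarith)]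
    simp
  · intro k _ ω
    unfold sharpVar
    split_ifs with h
    · exact ⟨h.1, hc'1 _⟩
    · simp
  · intro k hk u hu
    rw [sharpLaw_apply]
    have h00 : ((0, 0) : ℕ × ℕ) ∉ {ω | sharpVar t c' k ω ≤ u} := by
      simp [sharpVar, hu.2]
    rw [if_neg h00, add_zero]
    refine le_trans (Finset.sum_le_sum (g := fun i =>
      ENNReal.ofReal (if c i ≤ u then c i - c (i - 1) else 0)) fun i hi => ?_) ?_
    · have hi' := Finset.mem_Icc.1 hi
      have hi0 : (i : ℝ) ≠ 0 := by
        have : i ≠ 0 := by omega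
        exact_mod_cast this
      have key : ∀ j, (i, j) ∈ {ω | sharpVar t c' k ω ≤ u} → (k + j) % t < i ∧ c i ≤ u := by
        intro j hj
        simp only [Set.mem_ofPred_eq, sharpVar, hc' i hi'.2] at hj
        split_ifs at hj with h
        · exact ⟨h.2, hj⟩
        · linarith [hu.2]
      by_cases hciu : c i ≤ u
      · rw [if_pos hciu]
        calc _ ≤ ∑ j ∈ Finset.range t, (if (k + j) % t < i then
                ENNReal.ofReal ((c i - c (i - 1)) / (i : ℝ)) else 0) := by
              refine Finset.sum_le_sum fun j _ => ?_
              by_cases hj : (i, j) ∈ {ω | sharpVar t c' k ω ≤ u}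
              · rw [if_pos hj, if_pos (key j hj).1]
              · rw [if_neg hj]; exact zero_le
          _ = (i : ENNReal) * ENNReal.ofReal ((c i - c (i - 1)) / (i : ℝ)) := by
              have hcard := card_Ico_add_mod_lt (hi'.2.trans hm) 0 k
              rw [zero_add, Nat.Ico_zero_eq_range] at hcard
              rw [← Finset.sum_filter, Finset.sum_const, hcard, nsmul_eq_mul]
          _ = ENNReal.ofReal (c i - c (i - 1)) := by
              rw [← ENNReal.ofReal_natCast i, ← ENNReal.ofReal_mul (Nat.cast_nonneg _),
                mul_div_cancel₀ _ hi0]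
          _ ≤ _ := le_rfl
      · rw [Finset.sum_eq_zero]
        · exact zero_le
        · intro j _
          exact if_neg fun hj => hciu (key j hj).2
    · rw [← ENNReal.ofReal_sum_of_nonneg]
      · exact ENNReal.ofReal_le_ofReal (sum_increments_le hc0 hcmono hu.1.le)
      · intro i hi
        split_ifs
        · exact sub_nonneg.2 (hcmono i hi)
        · exact le_rfl
  · rw [sharpLaw_apply, ← sum_levels hcmono]
    -- The atom `(0, 0)` lies in the union only when `c m = 1`, and then it has no mass.
    have hrest : (if ((0, 0) : ℕ × ℕ) ∈ ⋃ i ∈ Finset.Icc 1 m,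
          {ω | i ≤ numLe (Finset.Icc 1 t) (sharpVar t c') (c i) ω} then
        ENNReal.ofReal (1 - (t : ℝ) * ∑ i ∈ Finset.Icc 1 m, (c i - c (i - 1)) / (i : ℝ))
        else 0) = 0 := by
      rcases hc1.lt_or_eq with h | h
      · refine if_neg fun hmem => ?_
        simp only [Set.mem_iUnion, Set.mem_ofPred_eq] at hmem
        obtain ⟨i, hi, hle⟩ := hmem
        rw [Finset.mem_Icc] at hi
        have hlt : c i < 1 := (le_of_increments hcmono hi.2 le_rfl).trans_lt h
        have hz : numLe (Finset.Icc 1 t) (sharpVar t c') (c i) (0, 0) = 0 := by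
          simp [numLe, sharpVar, hlt]
        omega
      · rw [ENNReal.ofReal_of_nonpos (by linarith [one_le_bound ht hm hc0 hcmono h]), ite_self]
    rw [hrest, add_zero]
    refine Finset.sum_congr rfl fun i hi => Finset.sum_congr rfl fun j _ => ?_
    have hi' := Finset.mem_Icc.1 hi
    have h0i : 0 ≤ c (i - 1) := hc0 ▸ le_of_increments hcmono (Nat.zero_le _) (by omega)
    rcases (h0i.trans (hcmono i hi)).lt_or_eq with hpos | hzero
    · refine if_pos ?_
      simp only [Set.mem_iUnion, Set.mem_ofPred_eq]
      refine ⟨i, hi, ?_⟩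
      have hcard := card_Ico_add_mod_lt (hi'.2.trans hm) 1 j
      unfold numLe
      conv_lhs => rw [← hcard]
      refine Finset.card_le_card fun k hk => ?_
      rw [Finset.mem_filter, Finset.mem_Ico] at hk
      rw [Finset.mem_filter, Finset.mem_Icc]
      refine ⟨by omega, ?_⟩
      have hk2 : (k + j) % t < i := by rw [add_comm]; exact hk.2
      simp [sharpVar, hc' i hi'.2, hpos, hk2]
    · rw [ENNReal.ofReal_of_nonpos, ite_self]
      exact div_nonpos_of_nonpos_of_nonneg (by linarith) (Nat.cast_nonneg _)

end GenError

end
end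

section
/- Fix n ≥ 1, 1 ≤ k ≤ n, α ∈ (0,1), and let d ∈ ℝ^n satisfy 0 ≤ d_1 ≤ ⋯ ≤ d_n, α·d_n ≤ 1 and (A^{kFWER-SU}(k) · d)_i ≤ 1 for all i = 1, …, n. Then for every probability space (Ω, P), every family of p-values PV_1, …, PV_n : Ω → [0,1] and every nonempty set I ⊆ {1,…,n} of true hypotheses with P(PV_i ≤ u) ≤ u for all i ∈ I and u ∈ (0,1), the step-up procedure with critical constants c_j = α·d_j satisfies P(V ≥ k) ≤ α, where V is the number of rejected true hypotheses. -/
/-!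
Write `i = |I|`. If the procedure makes `R` rejections, `v ≥ k` of them in `I`, then at most `n - i`
rejected hypotheses are false, so `R ≤ n - i + v`. Each of the `v` rejected true p-values is thus
`≤ c j` for every `j ≥ n - i + v`. Row `i` of the matrix is built so that its tail sums telescope:
`∑_{j ≥ n - i + v} A i j = i / v` for `k ≤ v ≤ i` (`sum_AkSU_tail`). Consequently, on the event
`{V ≥ k}`,
`1 ≤ ∑_{m ∈ I} ∑_j (A i j / i) 𝟙{PV m ≤ c j}`,
and a Markov inequality gives `P(V ≥ k) ≤ ∑_j A i j * c j = α * (A d)_i ≤ α`.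

The p-values are not assumed measurable, so `P` acts as an outer measure here; the Markov step
(`measure_le_of_one_le_sum`) replaces the events `{PV m ≤ c j}` by measurable supersets of the same
measure.
-/

open MeasureTheory

noncomputable section

namespace GenError

variable {Ω : Type*}

/-- Markov's inequality for weighted sums of indicators of arbitrary, possibly nonmeasurable,
sets. -/
lemma measure_le_of_one_le_sum {Ω ι : Type*} [MeasurableSpace Ω] (P : Measure Ω)
    (S : Finset ι) (a b : ι → ℝ) (B : ι → Set Ω) (E : Set Ω)
    (ha : ∀ s ∈ S, 0 ≤ a s) (hb : ∀ s ∈ S, 0 ≤ b s)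
    (hB : ∀ s ∈ S, P (B s) ≤ ENNReal.ofReal (b s))
    (hE : ∀ ω ∈ E, 1 ≤ ∑ s ∈ S, a s * (B s).indicator (fun _ => (1 : ℝ)) ω) :
    P E ≤ ENNReal.ofReal (∑ s ∈ S, a s * b s) := by
  have hmeas : ∀ s ∈ S, Measurable fun ω => ENNReal.ofReal (a s) *
      (toMeasurable P (B s)).indicator (fun _ => (1 : ENNReal)) ω := fun s _ =>
    (measurable_const.indicator (measurableSet_toMeasurable P (B s))).const_mul _
  calc P E ≤ P {ω | 1 ≤ ∑ s ∈ S, ENNReal.ofReal (a s) *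
          (toMeasurable P (B s)).indicator (fun _ => (1 : ENNReal)) ω} := by
        refine measure_mono fun ω hω => ?_
        have h1 := ENNReal.ofReal_le_ofReal (hE ω hω)
        rw [ENNReal.ofReal_one, ENNReal.ofReal_sum_of_nonneg (fun s hs =>
          mul_nonneg (ha s hs) (Set.indicator_nonneg (fun _ _ => zero_le_one) _))] at h1
        refine h1.trans (Finset.sum_le_sum fun s hs => ?_)
        rw [ENNReal.ofReal_mul (ha s hs)]
        gcongr
        by_cases hω' : ω ∈ B s
        · simp [hω', subset_toMeasurable P (B s) hω']
        · simp [hω']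
    _ ≤ ∫⁻ ω, ∑ s ∈ S, ENNReal.ofReal (a s) *
          (toMeasurable P (B s)).indicator (fun _ => (1 : ENNReal)) ω ∂P := by
        have := mul_meas_ge_le_lintegral (μ := P) (Finset.measurable_fun_sum S hmeas) 1
        simpa using this
    _ = ∑ s ∈ S, ENNReal.ofReal (a s) * P (B s) := by
        rw [lintegral_finsetSum' _ fun s hs => (hmeas s hs).aemeasurable]
        refine Finset.sum_congr rfl fun s _ => ?_
        rw [lintegral_const_mul _
            (measurable_const.indicator (measurableSet_toMeasurable P (B s))),
          lintegral_indicator_const (measurableSet_toMeasurable P (B s)), one_mul,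
          measure_toMeasurable]
    _ ≤ ∑ s ∈ S, ENNReal.ofReal (a s) * ENNReal.ofReal (b s) :=
        Finset.sum_le_sum fun s hs => by gcongr; exact hB s hs
    _ = ENNReal.ofReal (∑ s ∈ S, a s * b s) := by
        rw [ENNReal.ofReal_sum_of_nonneg fun s hs => mul_nonneg (ha s hs) (hb s hs)]
        exact Finset.sum_congr rfl fun s hs => (ENNReal.ofReal_mul (ha s hs)).symm

lemma AkSU_nonneg (n k i j : ℕ) (hk : 1 ≤ k) : 0 ≤ AkSU n k i j := by
  unfold AkSU
  split_ifs with h1 h2 h3 h4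
  · exact le_rfl
  · exact le_rfl
  · have hpos : (0 : ℝ) < ((j + i - n : ℕ) : ℝ) := by
      have : 0 < j + i - n := by omega
      exact_mod_cast this
    refine mul_nonneg (Nat.cast_nonneg _) (sub_nonneg.2 ?_)
    exact one_div_le_one_div_of_le hpos (by linarith)
  · exact zero_le_one
  · exact le_rfl

/-- The tail sums of row `i` telescope; with `t = i - v` the value is `i / v`. -/
lemma sum_AkSU_tail (n k i : ℕ) (hk : 1 ≤ k) (hi : i ≤ n) (t : ℕ) (ht : t + k ≤ i) :
    ∑ j ∈ Finset.Icc (n - t) n, AkSU n k i j = (i : ℝ) / ((i - t : ℕ) : ℝ) := by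
  induction t with
  | zero =>
    have hi0 : (i : ℝ) ≠ 0 := by
      have : i ≠ 0 := by omega
      exact_mod_cast this
    have h1 : ¬ i < k := by omega
    have h2 : ¬ n < n + k - i := by omega
    simp [AkSU, h1, h2, hi0]
  | succ t ih =>
    have hIcc : Finset.Icc (n - (t + 1)) n = insert (n - (t + 1)) (Finset.Icc (n - t) n) := by
      ext x
      simp only [Finset.mem_Icc, Finset.mem_insert]
      omega
    rw [hIcc, Finset.sum_insert (by simp only [Finset.mem_Icc]; omega), ih (by omega)]
    have h1 : ¬ i < k := by omega
    have h2 : ¬ n - (t + 1) < n + k - i := by omega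
    have h3 : n - (t + 1) < n := by omega
    have h4 : n - (t + 1) + i - n = i - (t + 1) := by omega
    have h5 : i - t = i - (t + 1) + 1 := by omega
    rw [AkSU, if_neg h1, if_neg h2, if_pos h3, h4, h5]
    push_cast
    ring

/-- On `{V ≥ 1}`, the number `R` of rejections exceeds `V` by at most the number of false
hypotheses. -/
lemma exists_rej_of_VSU_pos {Ω : Type*} (n : ℕ) (PV : ℕ → Ω → ℝ) (c : ℕ → ℝ) (I : Finset ℕ)
    (hI : I ⊆ Finset.Icc 1 n) (ω : Ω) (hV : 1 ≤ VSU n PV c I ω) :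
    ∃ R ∈ Finset.Icc 1 n, VSU n PV c I ω = (I.filter fun m => PV m ω ≤ c R).card ∧
      R + I.card ≤ n + VSU n PV c I ω := by
  set R := numRejSU n PV c ω with hR
  have hR0 : R ≠ 0 := by
    intro h0
    simp [VSU, numFalse, ← hR, h0] at hV
  have hVeq : VSU n PV c I ω = (I.filter fun m => PV m ω ≤ c R).card := by
    simp [VSU, numFalse, ← hR, hR0]
  have hmem : R ∈ (Finset.Icc 1 n).filter fun i => i ≤ numLe (Finset.Icc 1 n) PV (c i) ω := by
    have hne : ((Finset.Icc 1 n).filter fun i =>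
        i ≤ numLe (Finset.Icc 1 n) PV (c i) ω).Nonempty := by
      by_contra hne
      rw [Finset.not_nonempty_iff_eq_empty] at hne
      exact hR0 (by rw [hR, numRejSU, hne]; rfl)
    obtain ⟨x, hx, hxe⟩ := Finset.exists_mem_eq_sup _ hne id
    have hRx : R = x := hxe
    rw [hRx]
    exact hx
  obtain ⟨hRn, hRle⟩ := Finset.mem_filter.1 hmem
  refine ⟨R, hRn, hVeq, ?_⟩
  have hsub : (Finset.Icc 1 n).filter (fun m => PV m ω ≤ c R) ⊆
      (I.filter fun m => PV m ω ≤ c R) ∪ (Finset.Icc 1 n \ I) := by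
    intro m hm
    simp only [Finset.mem_filter, Finset.mem_union, Finset.mem_sdiff] at hm ⊢
    tauto
  have h1 := (Finset.card_le_card hsub).trans (Finset.card_union_le _ _)
  rw [Finset.card_sdiff_of_subset hI, Nat.card_Icc] at h1
  have h2 := Finset.card_le_card hI
  rw [Nat.card_Icc] at h2
  rw [numLe] at hRle
  omega

/-- sufficiency of the matrix condition for step-up k-FWER control. -/
theorem statement2 {Ω : Type*} [MeasurableSpace Ω] (P : Measure Ω) [IsProbabilityMeasure P]
    (n k : ℕ) (hn : 1 ≤ n) (hk : 1 ≤ k) (hkn : k ≤ n)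
    (α : ℝ) (hα : α ∈ Set.Ioo (0 : ℝ) 1)
    (d : ℕ → ℝ) (hd1 : 0 ≤ d 1) (hdmono : MonotoneOn d (Set.Icc 1 n))
    (hdn : α * d n ≤ 1)
    (hA : ∀ i ∈ Finset.Icc 1 n, ∑ j ∈ Finset.Icc 1 n, AkSU n k i j * d j ≤ 1)
    (PV : ℕ → Ω → ℝ) (hPV : ∀ i ∈ Finset.Icc 1 n, ∀ ω, PV i ω ∈ Set.Icc (0 : ℝ) 1)
    (I : Finset ℕ) (hI : I ⊆ Finset.Icc 1 n) (hIne : I.Nonempty)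
    (hnull : ∀ i ∈ I, ∀ u ∈ Set.Ioo (0 : ℝ) 1, P {ω | PV i ω ≤ u} ≤ ENNReal.ofReal u) :
    P {ω | k ≤ VSU n PV (fun j => α * d j) I ω} ≤ ENNReal.ofReal α := by
  obtain ⟨hα0, hα1⟩ := hα
  set c : ℕ → ℝ := fun j => α * d j with hc
  have hcmono : ∀ x ∈ Finset.Icc 1 n, ∀ y ∈ Finset.Icc 1 n, x ≤ y → c x ≤ c y := by
    intro x hx y hy hxy
    exact mul_le_mul_of_nonneg_left
      (hdmono (Finset.mem_Icc.1 hx) (Finset.mem_Icc.1 hy) hxy) hα0.le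
  have h1n : (1 : ℕ) ∈ Finset.Icc 1 n := by simp [hn]
  have hnn : n ∈ Finset.Icc 1 n := by simp [hn]
  have hc0 : ∀ j ∈ Finset.Icc 1 n, 0 ≤ c j := fun j hj =>
    (mul_nonneg hα0.le hd1).trans (hcmono 1 h1n j hj (Finset.mem_Icc.1 hj).1)
  have hc1 : ∀ j ∈ Finset.Icc 1 n, c j ≤ 1 := fun j hj =>
    (hcmono j hj n hnn (Finset.mem_Icc.1 hj).2).trans hdn
  -- The endpoints `u = 0` and `u = 1` follow by a limit and by total mass one.
  have hnull' : ∀ m ∈ I, ∀ u, 0 ≤ u → u ≤ 1 → P {ω | PV m ω ≤ u} ≤ ENNReal.ofReal u := by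
    intro m hm u hu0 hu1
    rcases hu1.lt_or_eq with hu1 | rfl
    · refine le_of_forall_gt_imp_ge_of_dense fun y hy => ?_
      obtain ⟨r, hr0, hur, hry⟩ := ENNReal.lt_iff_exists_real_btwn.1 hy
      have hur' : u < r := by
        by_contra hcon
        exact absurd hur (not_lt.2 (ENNReal.ofReal_le_ofReal (not_lt.1 hcon)))
      have hmin : u < min r ((u + 1) / 2) := lt_min hur' (by linarith)
      have hmin1 : min r ((u + 1) / 2) < 1 := (min_le_right _ _).trans_lt (by linarith)
      calc P {ω | PV m ω ≤ u} ≤ P {ω | PV m ω ≤ min r ((u + 1) / 2)} :=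
            measure_mono fun ω hω => le_trans hω hmin.le
        _ ≤ ENNReal.ofReal (min r ((u + 1) / 2)) :=
            hnull m hm _ ⟨hu0.trans_lt hmin, hmin1⟩
        _ ≤ ENNReal.ofReal r := ENNReal.ofReal_le_ofReal (min_le_left _ _)
        _ ≤ y := hry.le
    · simpa using prob_le_one
  set i := I.card with hi
  have hi1 : 1 ≤ i := hIne.card_pos
  have hin : i ≤ n := by simpa using Finset.card_le_card hI
  have hi0 : (0 : ℝ) < i := by exact_mod_cast hi1
  have key := measure_le_of_one_le_sum P (I ×ˢ Finset.Icc 1 n)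
    (fun s => AkSU n k i s.2 / i) (fun s => c s.2) (fun s => {ω | PV s.1 ω ≤ c s.2})
    {ω | k ≤ VSU n PV c I ω}
    (fun s _ => div_nonneg (AkSU_nonneg n k i s.2 hk) hi0.le)
    (fun s hs => hc0 _ (Finset.mem_product.1 hs).2)
    (fun s hs => by
      obtain ⟨h1, h2⟩ := Finset.mem_product.1 hs
      exact hnull' _ h1 _ (hc0 _ h2) (hc1 _ h2))
    (by
      intro ω hω
      have hkV : k ≤ VSU n PV c I ω := hω
      obtain ⟨R, hRn, hV, hRV⟩ := exists_rej_of_VSU_pos n PV c I hI ω (hk.trans hkV)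
      generalize VSU n PV c I ω = v at hkV hV hRV
      have hvi : v ≤ i := hV ▸ Finset.card_filter_le _ _
      have hv0 : (v : ℝ) ≠ 0 := by
        have : v ≠ 0 := by omega
        exact_mod_cast this
      have hRn' := Finset.mem_Icc.1 hRn
      have htail := sum_AkSU_tail n k i hk hin (i - v) (by omega)
      rw [show i - (i - v) = v by omega] at htail
      have hsub : (I.filter fun m => PV m ω ≤ c R) ×ˢ Finset.Icc (n - (i - v)) n ⊆
          I ×ˢ Finset.Icc 1 n := by
        refine Finset.product_subset_product (Finset.filter_subset _ _)
          (Finset.Icc_subset_Icc (by omega) le_rfl)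
      calc (1 : ℝ) = ∑ s ∈ (I.filter fun m => PV m ω ≤ c R) ×ˢ Finset.Icc (n - (i - v)) n,
              AkSU n k i s.2 / i := by
            rw [Finset.sum_product]
            simp only [← Finset.sum_div, htail, Finset.sum_const, ← hV, nsmul_eq_mul]
            field_simp
        _ = ∑ s ∈ (I.filter fun m => PV m ω ≤ c R) ×ˢ Finset.Icc (n - (i - v)) n,
              AkSU n k i s.2 / i *
                {ω | PV s.1 ω ≤ c s.2}.indicator (fun _ => (1 : ℝ)) ω := by
            refine Finset.sum_congr rfl fun s hs => ?_
            have hs' := Finset.mem_product.1 (hsub hs)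
            obtain ⟨h1, h2⟩ := Finset.mem_product.1 hs
            have h3 : R ≤ s.2 := by
              have := (Finset.mem_Icc.1 h2).1
              omega
            have h4 : ω ∈ {ω | PV s.1 ω ≤ c s.2} :=
              (Finset.mem_filter.1 h1).2.trans (hcmono R hRn s.2 hs'.2 h3)
            rw [Set.indicator_of_mem h4, mul_one]
        _ ≤ _ := by
            refine Finset.sum_le_sum_of_subset_of_nonneg hsub fun s _ _ => ?_
            exact mul_nonneg (div_nonneg (AkSU_nonneg n k i s.2 hk) hi0.le)
              (Set.indicator_nonneg (fun _ _ => zero_le_one) _))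
  refine key.trans (ENNReal.ofReal_le_ofReal ?_)
  rw [Finset.sum_product]
  simp only [Finset.sum_const, nsmul_eq_mul, ← hi]
  calc (i : ℝ) * ∑ j ∈ Finset.Icc 1 n, AkSU n k i j / i * c j
      = α * ∑ j ∈ Finset.Icc 1 n, AkSU n k i j * d j := by
        rw [Finset.mul_sum, Finset.mul_sum]
        refine Finset.sum_congr rfl fun j _ => ?_
        simp only [hc]
        field_simp
    _ ≤ α * 1 := mul_le_mul_of_nonneg_left (hA i (Finset.mem_Icc.2 ⟨hi1, hin⟩)) hα0.le
    _ = α := mul_one α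

end GenError

end
end

section
/- Fix n ≥ 1, 1 ≤ k ≤ n, α ∈ (0,1), and let d ∈ ℝ^n satisfy 0 ≤ d_1 ≤ ⋯ ≤ d_n, α·d_n ≤ 1 and (A^{kFWER-SD}(k) · d)_i ≤ 1 for all i = 1, …, n. Then for every probability space (Ω, P), every family of p-values PV_1, …, PV_n : Ω → [0,1] and every nonempty set I ⊆ {1,…,n} of true hypotheses with P(PV_i ≤ u) ≤ u for all i ∈ I and u ∈ (0,1), the step-down procedure with critical constants c_j = α·d_j satisfies P(V ≥ k) ≤ α, where V is the number of rejected true hypotheses. -/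
/-!
Let `m = n - |I| + k`. Whenever the step-down procedure rejects at least `k` true hypotheses, at
least `k` of the true p-values lie at or below the fixed threshold `α * d m` (`le_numLe_of_le_VSD`), so
the data-dependent number of rejections disappears. Markov's inequality for the number of such
p-values (`mul_measure_le_card_le_sum`) bounds the probability by `|I| * α * d m / k`, and row `|I|`
of the matrix condition says precisely that `|I| * d m / k ≤ 1`.
-/

open MeasureTheory

noncomputable section

namespace GenError

variable {Ω : Type*}

/-- Markov's inequality for the number of events that occur, `k · P(N ≥ k) ≤ ∑ P(E i)`. The events
need not be measurable: they are replaced by their measurable hulls. -/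
theorem mul_measure_le_card_le_sum {Ω : Type*} [MeasurableSpace Ω] (P : Measure Ω)
    (I : Finset ℕ) (PV : ℕ → Ω → ℝ) (x : ℝ) (k : ℕ) :
    (k : ENNReal) * P {ω | k ≤ numLe I PV x ω} ≤ ∑ i ∈ I, P {ω | PV i ω ≤ x} := by
  classical
  set T : ℕ → Set Ω := fun i => toMeasurable P {ω | PV i ω ≤ x} with hT
  have hTm : ∀ i, MeasurableSet (T i) := fun i => measurableSet_toMeasurable _ _
  set f : Ω → ENNReal := fun ω => ∑ i ∈ I, (T i).indicator 1 ω with hf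
  have hfm : Measurable f := by
    apply Finset.measurable_fun_sum
    intro i _
    exact measurable_one.indicator (hTm i)
  have hsub : {ω | k ≤ numLe I PV x ω} ⊆ {ω | (k : ENNReal) ≤ f ω} := by
    intro ω hω
    have h1 : (k : ENNReal) ≤ ((I.filter fun i => PV i ω ≤ x).card : ENNReal) := by
      exact_mod_cast hω
    refine h1.trans ?_
    simp only [hf]
    rw [Finset.card_filter, Nat.cast_sum]
    refine Finset.sum_le_sum fun i _ => ?_
    by_cases h : PV i ω ≤ x
    · have : ω ∈ T i := subset_toMeasurable P _ h
      simp [h, this]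
    · simp [h]
  calc (k : ENNReal) * P {ω | k ≤ numLe I PV x ω}
      ≤ k * P {ω | (k : ENNReal) ≤ f ω} := by gcongr
    _ ≤ ∫⁻ ω, f ω ∂P := mul_meas_ge_le_lintegral hfm _
    _ = ∑ i ∈ I, ∫⁻ ω, (T i).indicator 1 ω ∂P :=
        lintegral_finsetSum _ fun i _ => measurable_one.indicator (hTm i)
    _ = ∑ i ∈ I, P {ω | PV i ω ≤ x} := by
        refine Finset.sum_congr rfl fun i _ => ?_
        rw [lintegral_indicator_one (hTm i), hT, measure_toMeasurable]

/-- If the step-down procedure makes at least `k` false rejections, then at least `k` true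
hypotheses have p-values at or below the single critical constant `c (n - |I| + k)`. Either at most
`m = n - |I| + k` hypotheses are rejected, and monotonicity of `c` applies; or the procedure passed
step `m`, so at least `m` p-values are `≤ c m`, of which at most `n - |I|` are outside `I`. -/
theorem le_numLe_of_le_VSD {Ω : Type*} {n k : ℕ} (hk : 1 ≤ k) (PV : ℕ → Ω → ℝ) (c : ℕ → ℝ)
    (hc : MonotoneOn c (Set.Icc 1 n)) {I : Finset ℕ} (hI : I ⊆ Finset.Icc 1 n) {ω : Ω}
    (h : k ≤ VSD n PV c I ω) :
    k ≤ I.card ∧ k ≤ numLe I PV (c (n - I.card + k)) ω := by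
  classical
  unfold VSD numFalse at h
  set R := numRejSD n PV c ω with hR
  split_ifs at h with hR0
  · omega
  have hkI : k ≤ I.card := h.trans (Finset.card_filter_le _ _)
  have hIn : I.card ≤ n := by simpa using Finset.card_le_card hI
  refine ⟨hkI, ?_⟩
  set S := (Finset.Icc 1 n).filter fun i =>
      ∀ j ∈ Finset.Icc 1 i, j ≤ numLe (Finset.Icc 1 n) PV (c j) ω with hS
  have hRS : R = S.sup id := by rw [hR, hS]; unfold numRejSD; congr
  -- `R ≠ 0`, so the supremum defining `R` is attained at an index accepted by the procedure.
  have hne : S.Nonempty := by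
    rw [Finset.nonempty_iff_ne_empty]
    intro he
    rw [he] at hRS
    exact hR0 (by simpa using hRS)
  obtain ⟨r, hr, hrR⟩ := Finset.exists_mem_eq_sup S hne id
  rw [← hRS, id] at hrR
  rw [← hrR] at hr
  simp only [hS, Finset.mem_filter] at hr
  rw [Finset.mem_Icc] at hr
  obtain ⟨⟨hR1, hRn⟩, hRj⟩ := hr
  set m := n - I.card + k with hm
  rcases le_total R m with hle | hle
  · have hcm : c R ≤ c m := hc ⟨hR1, hRn⟩ ⟨by omega, by omega⟩ hle
    refine h.trans (Finset.card_le_card ?_)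
    intro i hi
    simp only [Finset.mem_filter] at hi ⊢
    exact ⟨hi.1, hi.2.trans hcm⟩
  · have h1 := hRj m (Finset.mem_Icc.2 ⟨by omega, hle⟩)
    have h2 : numLe (Finset.Icc 1 n) PV (c m) ω
        ≤ numLe I PV (c m) ω + (Finset.Icc 1 n \ I).card := by
      unfold numLe
      refine (Finset.card_le_card ?_).trans (Finset.card_union_le _ _)
      intro i hi
      simp only [Finset.mem_filter, Finset.mem_union, Finset.mem_sdiff] at hi ⊢
      tauto
    rw [Finset.card_sdiff_of_subset hI, Nat.card_Icc] at h2
    omega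

/-- sufficiency of the matrix condition for step-down k-FWER control. -/
theorem statement3 {Ω : Type*} [MeasurableSpace Ω] (P : Measure Ω) [IsProbabilityMeasure P]
    (n k : ℕ) (hn : 1 ≤ n) (hk : 1 ≤ k) (hkn : k ≤ n)
    (α : ℝ) (hα : α ∈ Set.Ioo (0 : ℝ) 1)
    (d : ℕ → ℝ) (hd1 : 0 ≤ d 1) (hdmono : MonotoneOn d (Set.Icc 1 n))
    (hdn : α * d n ≤ 1)
    (hA : ∀ i ∈ Finset.Icc 1 n, ∑ j ∈ Finset.Icc 1 n, AkSD n k i j * d j ≤ 1)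
    (PV : ℕ → Ω → ℝ) (hPV : ∀ i ∈ Finset.Icc 1 n, ∀ ω, PV i ω ∈ Set.Icc (0 : ℝ) 1)
    (I : Finset ℕ) (hI : I ⊆ Finset.Icc 1 n) (hIne : I.Nonempty)
    (hnull : ∀ i ∈ I, ∀ u ∈ Set.Ioo (0 : ℝ) 1, P {ω | PV i ω ≤ u} ≤ ENNReal.ofReal u) :
    P {ω | k ≤ VSD n PV (fun j => α * d j) I ω} ≤ ENNReal.ofReal α := by
  classical
  obtain ⟨hα0, hα1⟩ := hα
  by_cases hkI : k ≤ I.card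
  swap
  · have : {ω | k ≤ VSD n PV (fun j => α * d j) I ω} = ∅ := by
      ext ω
      simp only [Set.mem_ofPred_eq, Set.mem_empty_iff_false, iff_false]
      intro h
      have hcard : VSD n PV (fun j => α * d j) I ω ≤ I.card := by
        unfold VSD numFalse
        split_ifs
        · exact Nat.zero_le _
        · exact Finset.card_filter_le _ _
      omega
    simp [this]
  have hIn : I.card ≤ n := by simpa using Finset.card_le_card hI
  set m := n - I.card + k with hm
  have hm1 : 1 ≤ m := by omega
  have hmn : m ≤ n := by omega
  have hk0 : (0 : ℝ) < k := by exact_mod_cast hk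
  have hkI' : (k : ℝ) ≤ I.card := by exact_mod_cast hkI
  have hdm0 : 0 ≤ d m := hd1.trans (hdmono ⟨le_rfl, hn⟩ ⟨hm1, hmn⟩ hm1)
  -- Row `|I|` of the matrix condition has `j = m` as its only nonzero entry.
  have hrow : (I.card : ℝ) * d m ≤ k := by
    have h := hA I.card (Finset.mem_Icc.2 ⟨by omega, hIn⟩)
    rw [Finset.sum_eq_single m] at h
    · rw [AkSD, if_pos ⟨hkI, rfl⟩, div_mul_eq_mul_div, div_le_one hk0] at h
      exact h
    · intro j _ hj
      rw [AkSD, if_neg (fun h' => hj h'.2), zero_mul]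
    · intro h'
      exact absurd (Finset.mem_Icc.2 ⟨hm1, hmn⟩) h'
  have hdm1 : d m ≤ 1 := by
    by_contra! hlt
    nlinarith
  have hmono : MonotoneOn (fun j => α * d j) (Set.Icc 1 n) := fun a ha b hb hab =>
    mul_le_mul_of_nonneg_left (hdmono ha hb hab) hα0.le
  have hsub : {ω | k ≤ VSD n PV (fun j => α * d j) I ω} ⊆ {ω | k ≤ numLe I PV (α * d m) ω} :=
    fun ω hω => (le_numLe_of_le_VSD hk PV (fun j => α * d j) hmono hI hω).2
  -- The null bound is assumed on `(0, 1)` only; at `α * d m = 0` it is the limit from the right.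
  have hnull' : ∀ i ∈ I, P {ω | PV i ω ≤ α * d m} ≤ ENNReal.ofReal (α * d m) := by
    intro i hi
    have hu1 : α * d m < 1 := by nlinarith
    rcases (mul_nonneg hα0.le hdm0).eq_or_lt with h0 | h0
    · rw [← h0, ENNReal.ofReal_zero]
      refine ENNReal.le_of_forall_pos_le_add fun ε hε _ => ?_
      have hpos : (0 : ℝ) < min ε (1 / 2) := lt_min (by exact_mod_cast hε) (by norm_num)
      calc P {ω | PV i ω ≤ 0} ≤ P {ω | PV i ω ≤ min (ε : ℝ) (1 / 2)} :=
            measure_mono fun ω (hω : PV i ω ≤ 0) => hω.trans hpos.le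
        _ ≤ ENNReal.ofReal (min (ε : ℝ) (1 / 2)) :=
            hnull i hi _ ⟨hpos, (min_le_right _ _).trans_lt (by norm_num)⟩
        _ ≤ ENNReal.ofReal ε := ENNReal.ofReal_le_ofReal (min_le_left _ _)
        _ = 0 + ε := by rw [ENNReal.ofReal_coe_nnreal, zero_add]
    · exact hnull i hi _ ⟨h0, hu1⟩
  have hmain : (k : ENNReal) * P {ω | k ≤ VSD n PV (fun j => α * d j) I ω}
      ≤ k * ENNReal.ofReal α := by
    calc (k : ENNReal) * P {ω | k ≤ VSD n PV (fun j => α * d j) I ω}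
        ≤ k * P {ω | k ≤ numLe I PV (α * d m) ω} := by gcongr
      _ ≤ ∑ i ∈ I, P {ω | PV i ω ≤ α * d m} := mul_measure_le_card_le_sum P I PV _ k
      _ ≤ ∑ _i ∈ I, ENNReal.ofReal (α * d m) := Finset.sum_le_sum hnull'
      _ = ENNReal.ofReal (I.card * (α * d m)) := by
          rw [Finset.sum_const, nsmul_eq_mul, ENNReal.ofReal_mul (Nat.cast_nonneg _),
            ENNReal.ofReal_natCast]
      _ ≤ ENNReal.ofReal (k * α) := ENNReal.ofReal_le_ofReal (by nlinarith)
      _ = k * ENNReal.ofReal α := by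
          rw [ENNReal.ofReal_mul hk0.le, ENNReal.ofReal_natCast]
  exact (ENNReal.mul_le_mul_iff_right (by exact_mod_cast (by omega : k ≠ 0))
    (ENNReal.natCast_ne_top k)).1 hmain

end GenError

end
end

section
/- Fix n ≥ 1, γ ∈ [0,1), α ∈ (0,1), and let d ∈ ℝ^n satisfy 0 ≤ d_1 ≤ ⋯ ≤ d_n, α·d_n ≤ 1 and (A^{FDP-SU}(γ) · d)_i ≤ 1 for all i = 1, …, n. Then for every probability space (Ω, P), every family of p-values PV_1, …, PV_n : Ω → [0,1] and every nonempty set I ⊆ {1,…,n} of true hypotheses with P(PV_i ≤ u) ≤ u for all i ∈ I and u ∈ (0,1), the step-up procedure with critical constants c_j = α·d_j satisfies P(FDP > γ) ≤ α. -/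
/-!
Let `i = |I|` and `c j = α d j`. If `FDP > γ` and `R` hypotheses are rejected, the number `V` of
rejected true hypotheses satisfies `V ≥ m(R)` and `V ≥ i - n + R`, so `V ≥ g_i(R)`: at least
`g_i(R)` true p-values are `≤ c R`; moreover `m(R) ≤ i` gives `R ≤ M̃(i)`. The entries of row `i`
of the matrix in the columns `≥ R` sum to at least `i / g_i(R)` (`inv_gg_le_sum`), by a telescoping
sum: `g_i` is nondecreasing with increments at most one, and a column `j < M̃(i)` with
`g_i(j+1) = g_i(j) + 1` is exactly `t_k(i)` for `k = g_i(j)`. Hence on the event `FDP > γ`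
`1 ≤ ∑_{p ∈ I} ∑_j (A_{ij} / i) 1{PV_p ≤ c j}`,
as each of the `V` rejected true `p` contributes at least `1 / g_i(R)`. Markov's inequality in the
form `measure_le_weighted_sum`, together with `P(PV_p ≤ c j) ≤ c j`, bounds the probability by
`∑_j A_{ij} c j = α (A d)_i ≤ α`. The p-values need not be measurable: the Markov step passes to
measurable hulls.
-/

open MeasureTheory

noncomputable section

namespace GenError

variable {Ω : Type*}

/-- A weighted union bound: if the indicators of the sets `A j`, weighted by `w j`, sum to at least
`1` on `E`, then `P E ≤ ∑ w j * P (A j)`. No measurability is required. -/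
lemma measure_le_weighted_sum {ι : Type*} [MeasurableSpace Ω] (P : Measure Ω) (s : Finset ι)
    (w : ι → ℝ) (hw : ∀ j ∈ s, 0 ≤ w j) (A : ι → Set Ω) (E : Set Ω)
    (h : ∀ ω ∈ E, 1 ≤ ∑ j ∈ s, w j * (A j).indicator 1 ω) :
    P E ≤ ∑ j ∈ s, ENNReal.ofReal (w j) * P (A j) := by
  -- Replacing each `A j` by its measurable hull only enlarges the weighted sum.
  let f : Ω → ENNReal := fun ω =>
    ∑ j ∈ s, ENNReal.ofReal (w j) * (toMeasurable P (A j)).indicator 1 ω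
  have hind : ∀ j, Measurable fun ω =>
      ENNReal.ofReal (w j) * (toMeasurable P (A j)).indicator (1 : Ω → ENNReal) ω := fun j =>
    (measurable_one.indicator (measurableSet_toMeasurable P (A j))).const_mul _
  have hf : Measurable f := Finset.measurable_fun_sum s fun j _ => hind j
  have hsub : E ⊆ {ω | 1 ≤ f ω} := by
    intro ω hω
    have h1 := ENNReal.ofReal_le_ofReal (h ω hω)
    rw [ENNReal.ofReal_one, ENNReal.ofReal_sum_of_nonneg] at h1
    · refine h1.trans (Finset.sum_le_sum fun j hj => ?_)
      rw [ENNReal.ofReal_mul (hw j hj)]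
      gcongr
      by_cases hA : ω ∈ A j
      · simp [hA, subset_toMeasurable P (A j) hA]
      · simp [hA]
    · intro j hj
      exact mul_nonneg (hw j hj) (Set.indicator_nonneg (fun _ _ => zero_le_one) ω)
  calc P E ≤ P {ω | 1 ≤ f ω} := measure_mono hsub
    _ ≤ ∫⁻ ω, f ω ∂P := by simpa using mul_meas_ge_le_lintegral (μ := P) hf 1
    _ = ∑ j ∈ s, ENNReal.ofReal (w j) * P (A j) := by
      rw [lintegral_finsetSum _ fun j _ => hind j]
      refine Finset.sum_congr rfl fun j _ => ?_
      rw [lintegral_const_mul _ (measurable_one.indicator (measurableSet_toMeasurable P (A j))),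
        lintegral_indicator_one (measurableSet_toMeasurable P (A j)), measure_toMeasurable]

lemma mfl_mono {γ : ℝ} (hγ : 0 ≤ γ) : Monotone (mfl γ) := by
  intro a b hab
  have : ⌊γ * (a : ℝ)⌋ ≤ ⌊γ * (b : ℝ)⌋ := by gcongr
  unfold mfl
  omega

lemma mfl_succ_le {γ : ℝ} (hγ : γ < 1) (a : ℕ) : mfl γ (a + 1) ≤ mfl γ a + 1 := by
  have : ⌊γ * ((a + 1 : ℕ) : ℝ)⌋ ≤ ⌊γ * (a : ℝ)⌋ + 1 := by
    rw [← Int.floor_add_one]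
    apply Int.floor_le_floor
    push_cast
    linarith
  unfold mfl
  omega

lemma gg_mono {γ : ℝ} (hγ : 0 ≤ γ) (n i : ℕ) : Monotone (gg γ n i) := by
  intro a b hab
  have := mfl_mono hγ hab
  unfold gg
  omega

lemma gg_succ_le {γ : ℝ} (hγ : γ < 1) (n i a : ℕ) : gg γ n i (a + 1) ≤ gg γ n i a + 1 := by
  have := mfl_succ_le hγ a
  unfold gg
  omega

lemma gg_pos (γ : ℝ) (n i l : ℕ) : 1 ≤ gg γ n i l := by
  unfold gg mfl
  omega

lemma Mt_le (γ : ℝ) (n i : ℕ) : Mt γ n i ≤ n := by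
  refine Finset.sup_le fun l hl => ?_
  simp only [Finset.mem_filter, Finset.mem_Icc] at hl
  exact hl.1.2

lemma le_Mt {γ : ℝ} {n i l : ℕ} (h1 : 1 ≤ l) (hn : l ≤ n) (h : mfl γ l ≤ i) : l ≤ Mt γ n i :=
  Finset.le_sup (f := id) (by simp [h1, hn, h])

lemma tt_MM {γ : ℝ} {n i : ℕ} (h : 1 ≤ Mt γ n i) : tt γ n i (MM γ n i) = Mt γ n i := by
  apply le_antisymm
  · refine Finset.sup_le fun l hl => ?_
    simp only [Finset.mem_filter, Finset.mem_Icc] at hl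
    exact hl.1.2
  · exact Finset.le_sup (f := id)
      (Finset.mem_filter.mpr ⟨Finset.mem_Icc.mpr ⟨h, le_rfl⟩, rfl⟩)

/-- A column just before a jump of `g_i` is the last one of its level set. -/
lemma tt_gg {γ : ℝ} (hγ : 0 ≤ γ) {n i l : ℕ} (h1 : 1 ≤ l) (hl : l ≤ Mt γ n i)
    (h : gg γ n i l < gg γ n i (l + 1)) : tt γ n i (gg γ n i l) = l := by
  apply le_antisymm
  · refine Finset.sup_le fun a ha => ?_
    simp only [Finset.mem_filter, Finset.mem_Icc] at ha
    by_contra hlt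
    have := gg_mono hγ n i (show l + 1 ≤ a from not_le.mp hlt)
    omega
  · exact Finset.le_sup (f := id) (by simp [h1, hl])

lemma AFDPSU_nonneg (γ : ℝ) (n i j : ℕ) : 0 ≤ AFDPSU γ n i j := by
  unfold AFDPSU
  split_ifs with h1 h2
  · positivity
  · have : (0 : ℝ) < gg γ n i j := by exact_mod_cast h2.1
    have := one_div_le_one_div_of_le this (by linarith : (gg γ n i j : ℝ) ≤ gg γ n i j + 1)
    exact mul_nonneg (by positivity) (by linarith)
  · exact le_rfl

/-- The telescoping estimate: the tail of row `i` starting at column `R` sums to at least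
`i / g_i(R)`. The induction goes down from `R = M̃(i)`. -/
lemma inv_gg_le_sum {γ : ℝ} (hγ : γ ∈ Set.Ico (0 : ℝ) 1) {n i R : ℕ}
    (h1 : 1 ≤ R) (hR : R ≤ Mt γ n i) :
    (i : ℝ) / gg γ n i R ≤ ∑ j ∈ Finset.Icc R n, AFDPSU γ n i j := by
  have hMn := Mt_le γ n i
  induction hR using Nat.decreasingInduction with
  | self =>
    have hA : AFDPSU γ n i (Mt γ n i) = (i : ℝ) / gg γ n i (Mt γ n i) := by
      rw [AFDPSU, if_pos (tt_MM h1).symm, MM]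
    rw [← hA]
    exact Finset.single_le_sum (fun j _ => AFDPSU_nonneg γ n i j) (by simp [hMn])
  | of_succ R hlt ih =>
    have ih := ih (by omega)
    rw [← Finset.add_sum_Ioc_eq_sum_Icc (show R ≤ n by omega), ← Finset.Icc_succ_left_eq_Ioc]
    rw [Nat.succ_eq_succ]
    have hg := gg_mono hγ.1 n i (Nat.le_succ R)
    rcases hg.eq_or_lt with heq | hlt'
    · rw [heq]
      exact ih.trans (le_add_of_nonneg_left (AFDPSU_nonneg γ n i R))
    · have hs : gg γ n i (R + 1) = gg γ n i R + 1 :=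
        le_antisymm (gg_succ_le hγ.2 n i R) hlt'
      have hlast : gg γ n i (R + 1) ≤ MM γ n i := gg_mono hγ.1 n i hlt
      have hA : AFDPSU γ n i R
          = (i : ℝ) * (1 / (gg γ n i R : ℝ) - 1 / ((gg γ n i R : ℝ) + 1)) := by
        rw [AFDPSU, if_neg (by rw [tt_MM (by omega)]; omega),
          if_pos ⟨gg_pos γ n i R, by omega, (tt_gg hγ.1 h1 hlt.le hlt').symm⟩]
      rw [hs] at ih
      push_cast at ih
      rw [hA]
      calc (i : ℝ) / gg γ n i R
          = (i : ℝ) * (1 / (gg γ n i R : ℝ) - 1 / ((gg γ n i R : ℝ) + 1))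
            + (i : ℝ) / ((gg γ n i R : ℝ) + 1) := by ring
        _ ≤ _ := by gcongr

/-- If `FDP > γ`, then `R ∈ {1, …, M̃(i)}` and at least `g_i(R)` true p-values are `≤ c R`, where
`R` is the number of rejections and `i = |I|`. -/
lemma exists_of_lt_FDPSU {n : ℕ} {γ : ℝ} (hγ : 0 ≤ γ) {PV : ℕ → Ω → ℝ} {c : ℕ → ℝ}
    {I : Finset ℕ} (hI : I ⊆ Finset.Icc 1 n) {ω : Ω} (h : γ < FDPSU n PV c I ω) :
    ∃ R, 1 ≤ R ∧ R ≤ Mt γ n I.card ∧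
      gg γ n I.card R ≤ (I.filter fun p => PV p ω ≤ c R).card := by
  by_cases hR0 : numRejSU n PV c ω = 0
  · rw [FDPSU, if_pos hR0] at h
    exact absurd h (not_lt.mpr hγ)
  rw [FDPSU, if_neg hR0, VSU, numFalse, if_neg hR0] at h
  have hmem : numRejSU n PV c ω ∈
      (Finset.Icc 1 n).filter fun i => i ≤ numLe (Finset.Icc 1 n) PV (c i) ω := by
    have hne : ((Finset.Icc 1 n).filter
        fun i => i ≤ numLe (Finset.Icc 1 n) PV (c i) ω).Nonempty := by
      by_contra hne
      rw [Finset.not_nonempty_iff_eq_empty] at hne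
      exact hR0 (by rw [numRejSU, hne]; rfl)
    obtain ⟨x, hx, hx'⟩ := Finset.exists_mem_eq_sup _ hne id
    rw [numRejSU, hx']
    exact hx
  set R := numRejSU n PV c ω
  rw [Finset.mem_filter, Finset.mem_Icc] at hmem
  obtain ⟨⟨h1, hn⟩, hle⟩ := hmem
  set V := (I.filter fun p => PV p ω ≤ c R).card with hV
  have hm : mfl γ R ≤ V := by
    have hRpos : (0 : ℝ) < R := by exact_mod_cast h1
    rw [lt_div_iff₀ hRpos] at h
    have : ⌊γ * (R : ℝ)⌋ < (V : ℤ) := Int.floor_lt.mpr (by exact_mod_cast h)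
    have : 0 ≤ ⌊γ * (R : ℝ)⌋ := Int.floor_nonneg.mpr (by positivity)
    unfold mfl
    omega
  have hVI : V ≤ I.card := Finset.card_filter_le _ _
  -- At most `n - |I|` of the rejected hypotheses are false.
  have hsplit : R ≤ V + (n - I.card) := by
    have hsub : ((Finset.Icc 1 n).filter fun p => PV p ω ≤ c R) ⊆
        (I.filter fun p => PV p ω ≤ c R) ∪ (Finset.Icc 1 n \ I) := by
      intro p hp
      simp only [Finset.mem_filter, Finset.mem_union, Finset.mem_sdiff] at hp ⊢
      tauto
    have := hle.trans ((Finset.card_le_card hsub).trans (Finset.card_union_le _ _))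
    rw [Finset.card_sdiff_of_subset hI, Nat.card_Icc] at this
    omega
  have hIn : I.card ≤ n := by simpa using Finset.card_le_card hI
  refine ⟨R, h1, le_Mt h1 hn (hm.trans hVI), ?_⟩
  unfold gg
  omega

/-- The bound `P(X ≤ u) ≤ u` for `u ∈ (0,1)` extends to the endpoints `0` and `1`. -/
lemma measure_le_of_mem_Icc [MeasurableSpace Ω] (P : Measure Ω) [IsProbabilityMeasure P]
    {X : Ω → ℝ} (h : ∀ u ∈ Set.Ioo (0 : ℝ) 1, P {ω | X ω ≤ u} ≤ ENNReal.ofReal u)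
    {u : ℝ} (hu0 : 0 ≤ u) (hu1 : u ≤ 1) : P {ω | X ω ≤ u} ≤ ENNReal.ofReal u := by
  rcases hu1.eq_or_lt with rfl | hu1
  · simpa using prob_le_one
  -- At `0` the bound is the limit of the bounds at `v ↓ 0`.
  refine ENNReal.le_of_forall_pos_le_add fun ε hε _ => ?_
  obtain ⟨v, huv, hv⟩ := exists_between (lt_min (lt_add_of_pos_right u (NNReal.coe_pos.mpr hε)) hu1)
  rw [lt_min_iff] at hv
  calc P {ω | X ω ≤ u} ≤ P {ω | X ω ≤ v} := measure_mono fun ω hω => le_trans hω huv.le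
    _ ≤ ENNReal.ofReal v := h v ⟨hu0.trans_lt huv, hv.2⟩
    _ ≤ ENNReal.ofReal (u + ε) := ENNReal.ofReal_le_ofReal hv.1.le
    _ = ENNReal.ofReal u + ε := by
      rw [ENNReal.ofReal_add hu0 ε.coe_nonneg, ENNReal.ofReal_coe_nnreal]

/-- sufficiency of the matrix condition for step-up FDP control. -/
theorem statement5 {Ω : Type*} [MeasurableSpace Ω] (P : Measure Ω) [IsProbabilityMeasure P]
    (n : ℕ) (hn : 1 ≤ n) (γ : ℝ) (hγ : γ ∈ Set.Ico (0 : ℝ) 1)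
    (α : ℝ) (hα : α ∈ Set.Ioo (0 : ℝ) 1)
    (d : ℕ → ℝ) (hd1 : 0 ≤ d 1) (hdmono : MonotoneOn d (Set.Icc 1 n))
    (hdn : α * d n ≤ 1)
    (hA : ∀ i ∈ Finset.Icc 1 n, ∑ j ∈ Finset.Icc 1 n, AFDPSU γ n i j * d j ≤ 1)
    (PV : ℕ → Ω → ℝ) (hPV : ∀ i ∈ Finset.Icc 1 n, ∀ ω, PV i ω ∈ Set.Icc (0 : ℝ) 1)
    (I : Finset ℕ) (hI : I ⊆ Finset.Icc 1 n) (hIne : I.Nonempty)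
    (hnull : ∀ i ∈ I, ∀ u ∈ Set.Ioo (0 : ℝ) 1, P {ω | PV i ω ≤ u} ≤ ENNReal.ofReal u) :
    P {ω | γ < FDPSU n PV (fun j => α * d j) I ω} ≤ ENNReal.ofReal α := by
  have hin : I.card ∈ Finset.Icc 1 n := Finset.mem_Icc.mpr
    ⟨hIne.card_pos, by simpa using Finset.card_le_card hI⟩
  have hi : (0 : ℝ) < I.card := by exact_mod_cast hIne.card_pos
  have hd : ∀ j ∈ Finset.Icc 1 n, 0 ≤ α * d j ∧ α * d j ≤ 1 := by
    intro j hj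
    rw [Finset.mem_Icc] at hj
    have h1 := hdmono ⟨le_rfl, hn⟩ hj hj.1
    have h2 := hdmono hj ⟨hn, le_rfl⟩ hj.2
    exact ⟨mul_nonneg hα.1.le (hd1.trans h1),
      (mul_le_mul_of_nonneg_left h2 hα.1.le).trans hdn⟩
  have hw : ∀ j, 0 ≤ AFDPSU γ n I.card j / I.card := fun j =>
    div_nonneg (AFDPSU_nonneg γ n I.card j) hi.le
  have key := measure_le_weighted_sum P (I ×ˢ Finset.Icc 1 n)
    (fun q => AFDPSU γ n I.card q.2 / I.card) (fun q _ => hw q.2)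
    (fun q => {ω | PV q.1 ω ≤ α * d q.2})
    {ω | γ < FDPSU n PV (fun j => α * d j) I ω} ?_
  · refine key.trans ?_
    calc ∑ q ∈ I ×ˢ Finset.Icc 1 n, ENNReal.ofReal (AFDPSU γ n I.card q.2 / I.card)
            * P {ω | PV q.1 ω ≤ α * d q.2}
        ≤ ∑ q ∈ I ×ˢ Finset.Icc 1 n,
            ENNReal.ofReal (AFDPSU γ n I.card q.2 / I.card * (α * d q.2)) := by
          refine Finset.sum_le_sum fun q hq => ?_
          rw [Finset.mem_product] at hq
          rw [ENNReal.ofReal_mul (hw q.2)]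
          gcongr
          exact measure_le_of_mem_Icc P (hnull q.1 hq.1) (hd q.2 hq.2).1 (hd q.2 hq.2).2
      _ = ENNReal.ofReal (α * ∑ j ∈ Finset.Icc 1 n, AFDPSU γ n I.card j * d j) := by
          rw [← ENNReal.ofReal_sum_of_nonneg, Finset.sum_product]
          · dsimp only
            rw [Finset.sum_const, nsmul_eq_mul, Finset.mul_sum, Finset.mul_sum]
            congr 1
            refine Finset.sum_congr rfl fun j _ => ?_
            field_simp
          · intro q hq
            exact mul_nonneg (hw q.2) (hd q.2 (Finset.mem_product.mp hq).2).1
      _ ≤ ENNReal.ofReal α := ENNReal.ofReal_le_ofReal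
          (mul_le_of_le_one_right hα.1.le (hA _ hin))
  · intro ω hω
    obtain ⟨R, hR1, hRM, hRV⟩ := exists_of_lt_FDPSU hγ.1 hI hω
    have hg : (0 : ℝ) < gg γ n I.card R := by exact_mod_cast gg_pos γ n I.card R
    have hRn := hRM.trans (Mt_le γ n I.card)
    -- Each true p-value `≤ c R` is `≤ c j` for all `j ≥ R`, so it collects the tail of the row.
    have hterm : ∀ p ∈ I.filter (fun p => PV p ω ≤ α * d R), 1 / (gg γ n I.card R : ℝ) ≤
        ∑ j ∈ Finset.Icc 1 n, AFDPSU γ n I.card j / I.card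
          * ({ω | PV p ω ≤ α * d j} : Set Ω).indicator 1 ω := by
      intro p hp
      rw [Finset.mem_filter] at hp
      calc 1 / (gg γ n I.card R : ℝ) = (I.card : ℝ) / gg γ n I.card R / I.card := by field_simp
        _ ≤ (∑ j ∈ Finset.Icc R n, AFDPSU γ n I.card j) / I.card := by
          gcongr
          exact inv_gg_le_sum hγ hR1 hRM
        _ = ∑ j ∈ Finset.Icc R n, AFDPSU γ n I.card j / I.card
              * ({ω | PV p ω ≤ α * d j} : Set Ω).indicator 1 ω := by
          rw [Finset.sum_div]
          refine Finset.sum_congr rfl fun j hj => ?_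
          rw [Finset.mem_Icc] at hj
          have hdj := hdmono ⟨hR1, hRn⟩ ⟨hR1.trans hj.1, hj.2⟩ hj.1
          have hmem : ω ∈ {ω | PV p ω ≤ α * d j} :=
            hp.2.trans (mul_le_mul_of_nonneg_left hdj hα.1.le)
          rw [Set.indicator_of_mem hmem, Pi.one_apply, mul_one]
        _ ≤ _ := Finset.sum_le_sum_of_subset_of_nonneg (Finset.Icc_subset_Icc_left hR1)
          fun j _ _ => mul_nonneg (hw j) (Set.indicator_nonneg (fun _ _ => zero_le_one) ω)
    rw [Finset.sum_product]
    calc (1 : ℝ) ≤ (I.filter fun p => PV p ω ≤ α * d R).card • (1 / (gg γ n I.card R : ℝ)) := by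
          rw [nsmul_eq_mul, mul_one_div, one_le_div hg]
          exact_mod_cast hRV
      _ ≤ _ := Finset.card_nsmul_le_sum _ _ _ hterm
      _ ≤ _ := Finset.sum_le_sum_of_subset_of_nonneg (Finset.filter_subset _ _)
          fun p _ _ => Finset.sum_nonneg fun j _ =>
            mul_nonneg (hw j) (Set.indicator_nonneg (fun _ _ => zero_le_one) ω)

end GenError

end
end

section
/- Fix n ≥ 1, γ ∈ (0,1), α ∈ (0,1), and let d ∈ ℝ^n satisfy 0 ≤ d_1 ≤ ⋯ ≤ d_n, α·d_n ≤ 1 and (A^{FDP-SD}(γ) · d)_i ≤ 1 for all i = 1, …, n. Then for every probability space (Ω, P), every family of p-values PV_1, …, PV_n : Ω → [0,1] and every nonempty set I ⊆ {1,…,n} of true hypotheses with P(PV_i ≤ u) ≤ u for all i ∈ I and u ∈ (0,1), the step-down procedure with critical constants c_j = α·d_j satisfies P(FDP > γ) ≤ α. -/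
/-!
Let `m = |I|`, let `c j = α * d j` and `β l = c (k_m(l))`. The proof has two halves.

*Combinatorics.* If `FDP > γ`, let `j ≤ R` be the first step at which more than `γ j` true p-values
are `≤ c j`, and put `l = ⌊γ j⌋ + 1`. At the preceding step there were at most `γ (j - 1)` true
p-values among at least `j - 1` small ones, so `j - 1 - ⌊γ (j - 1)⌋ ≤ n - m`. This bounds `l` by
`N(m)` and `j` by `k_m(l)`, so at least `l` true p-values are `≤ β l` for some `1 ≤ l ≤ N(m)`
(`exists_crossing`).

*Probability.* The weights `Ã m l` telescope: their sum over `l ≥ l₀` is `m / l₀`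
(`sum_Atilde_tail`). As `β` is nondecreasing, the weighted count `∑_{p ∈ I} ∑_l Ã m l 1{PV p ≤ β l}`
is at least `l₀ * (m / l₀) = m` on the event above. Markov's inequality and `P (PV p ≤ β l) ≤ β l`
give `m * P(FDP > γ) ≤ m * ∑_l Ã m l β l = m * α * (A d)_m ≤ m * α`. The p-values need not be
measurable, so Markov's inequality is used for outer measures (`outer_markov`).
-/

open MeasureTheory

noncomputable section

namespace GenError

variable {Ω : Type*}

/-- Markov's inequality for a weighted count of arbitrary, possibly nonmeasurable, sets: each set
is replaced by its measurable hull, which has the same measure. -/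
lemma outer_markov [MeasurableSpace Ω] (P : Measure Ω) {ι : Type*} (s : Finset ι)
    (a : ι → ENNReal) (S : ι → Set Ω) (E : Set Ω) (c : ENNReal)
    (h : ∀ ω ∈ E, c ≤ ∑ x ∈ s, a x * (S x).indicator 1 ω) :
    c * P E ≤ ∑ x ∈ s, a x * P (S x) := by
  have hmeas : ∀ x ∈ s, Measurable fun ω =>
      a x * (toMeasurable P (S x)).indicator (1 : Ω → ENNReal) ω := fun x _ =>
    (measurable_one.indicator (measurableSet_toMeasurable P (S x))).const_mul _
  have hsub : E ⊆ {ω | c ≤ ∑ x ∈ s, a x * (toMeasurable P (S x)).indicator 1 ω} := fun ω hω =>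
    (h ω hω).trans <| Finset.sum_le_sum fun x _ => by
      gcongr
      exact subset_toMeasurable P (S x)
  calc c * P E ≤ c * P {ω | c ≤ ∑ x ∈ s, a x * (toMeasurable P (S x)).indicator 1 ω} := by
        gcongr
    _ ≤ ∫⁻ ω, ∑ x ∈ s, a x * (toMeasurable P (S x)).indicator 1 ω ∂P :=
        mul_meas_ge_le_lintegral (Finset.measurable_fun_sum s hmeas) c
    _ = ∑ x ∈ s, a x * P (S x) := by
        rw [lintegral_finsetSum s hmeas]
        refine Finset.sum_congr rfl fun x _ => ?_
        rw [lintegral_const_mul _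
          (measurable_one.indicator (measurableSet_toMeasurable P (S x))),
          lintegral_indicator_one (measurableSet_toMeasurable P (S x)), measure_toMeasurable]

lemma Atilde_nonneg (γ : ℝ) (n i j : ℕ) : 0 ≤ Atilde γ n i j := by
  unfold Atilde
  split_ifs with h1 h2
  · have : (0 : ℝ) < j := by exact_mod_cast h1.1
    have : 1 / ((j : ℝ) + 1) ≤ 1 / j := one_div_le_one_div_of_le this (by linarith)
    exact mul_nonneg (by positivity) (by linarith)
  · positivity
  · exact le_rfl

/-- The weights `Ã i l` telescope to the tail sums `i / l₀`. -/
lemma sum_Atilde_tail (γ : ℝ) (n i l₀ : ℕ) (h1 : 1 ≤ l₀) (hN : l₀ ≤ NN γ n i) :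
    ∑ l ∈ Finset.Icc l₀ (NN γ n i), Atilde γ n i l = i / l₀ := by
  induction hN using Nat.decreasingInduction with
  | self =>
    rw [Finset.Icc_self, Finset.sum_singleton]
    simp [Atilde]
  | of_succ k hk ih =>
    have hk0 : (0 : ℝ) < k := by exact_mod_cast h1
    rw [← Finset.add_sum_Ioc_eq_sum_Icc hk.le, ← Finset.Icc_succ_left_eq_Ioc, Order.succ_eq_add_one,
      ih (by omega), Atilde, if_pos ⟨h1, hk⟩]
    push_cast
    field_simp
    ring

lemma kk_mem (γ : ℝ) (hγ : γ ∈ Set.Ioo (0 : ℝ) 1) (n i l : ℕ) (hn : 1 ≤ n) (hi : i ≤ n)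
    (hl : 1 ≤ l) : kk γ n i l ∈ Set.Icc 1 n := by
  have hl' : (1 : ℝ) ≤ l := by exact_mod_cast hl
  have h : 1 < ⌈(l : ℝ) / γ⌉₊ := Nat.lt_ceil.2 (by
    rw [Nat.cast_one, lt_div_iff₀ hγ.1]; linarith [hγ.2])
  rw [kk, Int.ceil_toNat]
  constructor <;> omega

lemma kk_mono (γ : ℝ) (hγ : γ ∈ Set.Ioo (0 : ℝ) 1) (n i : ℕ) : Monotone (kk γ n i) := by
  intro a b hab
  have h : ⌈(a : ℝ) / γ⌉₊ ≤ ⌈(b : ℝ) / γ⌉₊ :=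
    Nat.ceil_mono (div_le_div_of_nonneg_right (by exact_mod_cast hab) hγ.1.le)
  simp only [kk, Int.ceil_toNat]
  omega

/-- Superuniformity on `(0, 1)` extends to the closed unit interval: at `0` by monotonicity, and
at `1` because `P` is a probability measure. -/
lemma null_Icc [MeasurableSpace Ω] (P : Measure Ω) [IsProbabilityMeasure P] (X : Ω → ℝ)
    (h : ∀ u ∈ Set.Ioo (0 : ℝ) 1, P {ω | X ω ≤ u} ≤ ENNReal.ofReal u)
    (u : ℝ) (h0 : 0 ≤ u) (h1 : u ≤ 1) : P {ω | X ω ≤ u} ≤ ENNReal.ofReal u := by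
  rcases h1.eq_or_lt with rfl | h1
  · simpa using prob_le_one
  rcases h0.eq_or_lt with rfl | h0
  · have hlim : Filter.Tendsto ENNReal.ofReal (nhdsWithin (0 : ℝ) (Set.Ioi 0))
        (nhds (ENNReal.ofReal 0)) :=
      (ENNReal.continuous_ofReal.tendsto 0).mono_left nhdsWithin_le_nhds
    refine ge_of_tendsto hlim ?_
    filter_upwards [Ioo_mem_nhdsGT (zero_lt_one' ℝ)] with v hv
    exact (measure_mono fun ω (hω : X ω ≤ 0) => hω.trans hv.1.le).trans (h v hv)
  · exact h u ⟨h0, h1⟩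

/-- Up to the number of rejections, every order statistic is below its critical constant. -/
lemma le_numLe_of_le_numRejSD (n : ℕ) (PV : ℕ → Ω → ℝ) (c : ℕ → ℝ) (ω : Ω)
    (hR : numRejSD n PV c ω ≠ 0) : numRejSD n PV c ω ≤ n ∧
      ∀ j, 1 ≤ j → j ≤ numRejSD n PV c ω → j ≤ numLe (Finset.Icc 1 n) PV (c j) ω := by
  unfold numRejSD at hR ⊢
  -- `numRejSD` filters with the classical decidability instance, not the one for bounded `∀`.
  generalize hF : @Finset.filter ℕ
    (fun i => ∀ j ∈ Finset.Icc 1 i, j ≤ numLe (Finset.Icc 1 n) PV (c j) ω)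
    (fun _ => Classical.propDecidable _) (Finset.Icc 1 n) = F at hR ⊢
  have hne : F.Nonempty := by
    rw [Finset.nonempty_iff_ne_empty]
    rintro rfl
    simp at hR
  obtain ⟨r, hr, hrR⟩ := Finset.exists_mem_eq_sup F hne id
  rw [hrR]
  rw [← hF] at hr
  replace hr := (@Finset.mem_filter ℕ _ (fun _ => Classical.propDecidable _) _ r).1 hr
  exact ⟨(Finset.mem_Icc.1 hr.1).2, fun j h1 h2 => hr.2 j (Finset.mem_Icc.2 ⟨h1, h2⟩)⟩

/-- If the false discovery proportion exceeds `γ`, then for some `1 ≤ l ≤ N(|I|)` at least `l` of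
the true p-values are at most `c (k_{|I|}(l))`. -/
lemma exists_crossing (n : ℕ) (γ : ℝ) (hγ : γ ∈ Set.Ioo (0 : ℝ) 1) (c : ℕ → ℝ)
    (hc : MonotoneOn c (Set.Icc 1 n)) (PV : ℕ → Ω → ℝ) (I : Finset ℕ) (hI : I ⊆ Finset.Icc 1 n)
    (ω : Ω) (h : γ < FDPSD n PV c I ω) :
    ∃ l, 1 ≤ l ∧ l ≤ NN γ n I.card ∧
      l ≤ (I.filter fun p => PV p ω ≤ c (kk γ n I.card l)).card := by
  obtain ⟨hγ0, hγ1⟩ := hγ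
  set R := numRejSD n PV c ω with hRdef
  have hR0 : R ≠ 0 := by
    intro h0
    rw [FDPSD, ← hRdef, if_pos h0] at h
    linarith
  obtain ⟨hRn, hle⟩ := le_numLe_of_le_numRejSD n PV c ω hR0
  rw [← hRdef] at hRn hle
  set v : ℕ → ℕ := fun j => (I.filter fun p => PV p ω ≤ c j).card with hv
  have hV : γ * R < v R := by
    have hRpos : (0 : ℝ) < R := by exact_mod_cast Nat.pos_of_ne_zero hR0
    rw [FDPSD, ← hRdef, if_neg hR0, VSD, ← hRdef, numFalse, if_neg hR0, lt_div_iff₀ hRpos] at h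
    exact h
  have hcard : I.card ≤ n := by simpa using Finset.card_le_card hI
  -- At any step the small p-values split into true ones and at most `n - |I|` others.
  have hsplit : ∀ j, 1 ≤ j → j ≤ R → j + I.card ≤ v j + n := by
    intro j h1 h2
    have hj := hle j h1 h2
    have : numLe (Finset.Icc 1 n) PV (c j) ω ≤ v j + (Finset.Icc 1 n \ I).card := by
      refine le_trans (Finset.card_le_card ?_) (Finset.card_union_le _ _)
      intro p hp
      simp only [Finset.mem_union, Finset.mem_filter, Finset.mem_sdiff] at hp ⊢
      tauto
    rw [Finset.card_sdiff_of_subset hI, Nat.card_Icc] at this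
    omega
  have hex : ∃ j, 1 ≤ j ∧ j ≤ R ∧ γ * j < v j := ⟨R, Nat.pos_of_ne_zero hR0, le_rfl, hV⟩
  classical
  obtain ⟨hj1, hjR, hjv⟩ := Nat.find_spec hex
  have hmin := fun k (hk : k < Nat.find hex) => Nat.find_min hex hk
  set j := Nat.find hex
  have hγj : 0 ≤ γ * j := by positivity
  -- The bound from step `j - 1`; for `j = 1` it holds because `|I| ≤ n`.
  have hprev : (j - 1) + I.card ≤ ⌊γ * ((j - 1 : ℕ) : ℝ)⌋₊ + n := by
    rcases Nat.eq_zero_or_pos (j - 1) with h0 | h0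
    · omega
    · have hk := hmin (j - 1) (by omega)
      push Not at hk
      have h3 : v (j - 1) ≤ ⌊γ * ((j - 1 : ℕ) : ℝ)⌋₊ := Nat.le_floor (hk h0 (by omega))
      have h4 := hsplit (j - 1) h0 (by omega)
      omega
  have hjcast : ((j - 1 : ℕ) : ℝ) = j - 1 := by push_cast [hj1]; ring
  have hlv : ⌊γ * (j : ℝ)⌋₊ + 1 ≤ v j := (Nat.floor_lt hγj).2 hjv
  refine ⟨⌊γ * (j : ℝ)⌋₊ + 1, by omega, ?_, ?_⟩
  · have hvI : v j ≤ I.card := Finset.card_filter_le _ _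
    have h1 : ⌊γ * (j : ℝ)⌋₊ ≤ ⌊γ * (n : ℝ)⌋₊ :=
      Nat.floor_mono (by gcongr; exact hjR.trans hRn)
    have h2 : ⌊γ * (j : ℝ)⌋₊ ≤ ⌊γ * ((((n : ℝ) - (I.card : ℝ)) / (1 - γ)) + 1)⌋₊ := by
      refine Nat.floor_mono (mul_le_mul_of_nonneg_left ?_ hγ0.le)
      have h3 : ((j - 1 : ℕ) : ℝ) + I.card ≤ (⌊γ * ((j - 1 : ℕ) : ℝ)⌋₊ : ℝ) + n := by
        exact_mod_cast hprev
      have h4 := Nat.floor_le (show 0 ≤ γ * ((j - 1 : ℕ) : ℝ) by positivity)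
      rw [hjcast] at h3 h4
      rw [← sub_le_iff_le_add, le_div_iff₀ (by linarith)]
      linarith
    rw [NN, Int.floor_toNat, Int.floor_toNat]
    omega
  · have hjk : j ≤ kk γ n I.card (⌊γ * (j : ℝ)⌋₊ + 1) := by
      have h1 : j < ⌈((⌊γ * (j : ℝ)⌋₊ + 1 : ℕ) : ℝ) / γ⌉₊ := by
        rw [Nat.lt_ceil, lt_div_iff₀ hγ0, mul_comm]
        push_cast
        exact Nat.lt_floor_add_one _
      have h2 : ⌊γ * ((j - 1 : ℕ) : ℝ)⌋₊ ≤ ⌊γ * (j : ℝ)⌋₊ :=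
        Nat.floor_mono (by gcongr; omega)
      rw [kk, Int.ceil_toNat]
      omega
    have hmem := kk_mem γ ⟨hγ0, hγ1⟩ n I.card (⌊γ * (j : ℝ)⌋₊ + 1) (by omega) hcard (by omega)
    refine hlv.trans (Finset.card_le_card ?_)
    intro p hp
    rw [Finset.mem_filter] at hp ⊢
    exact ⟨hp.1, hp.2.trans (hc ⟨hj1, hjR.trans hRn⟩ hmem hjk)⟩

/-- sufficiency of the matrix condition for step-down FDP control. -/
theorem statement6 {Ω : Type*} [MeasurableSpace Ω] (P : Measure Ω) [IsProbabilityMeasure P]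
    (n : ℕ) (hn : 1 ≤ n) (γ : ℝ) (hγ : γ ∈ Set.Ioo (0 : ℝ) 1)
    (α : ℝ) (hα : α ∈ Set.Ioo (0 : ℝ) 1)
    (d : ℕ → ℝ) (hd1 : 0 ≤ d 1) (hdmono : MonotoneOn d (Set.Icc 1 n))
    (hdn : α * d n ≤ 1)
    (hA : ∀ i ∈ Finset.Icc 1 n, ∑ j ∈ Finset.Icc 1 n, AFDPSD γ n i j * d j ≤ 1)
    (PV : ℕ → Ω → ℝ) (hPV : ∀ i ∈ Finset.Icc 1 n, ∀ ω, PV i ω ∈ Set.Icc (0 : ℝ) 1)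
    (I : Finset ℕ) (hI : I ⊆ Finset.Icc 1 n) (hIne : I.Nonempty)
    (hnull : ∀ i ∈ I, ∀ u ∈ Set.Ioo (0 : ℝ) 1, P {ω | PV i ω ≤ u} ≤ ENNReal.ofReal u) :
    P {ω | γ < FDPSD n PV (fun j => α * d j) I ω} ≤ ENNReal.ofReal α := by
  set m := I.card with hm
  have hm1 : 1 ≤ m := hIne.card_pos
  have hmn : m ≤ n := by simpa using Finset.card_le_card hI
  set c : ℕ → ℝ := fun j => α * d j with hcdef
  have hc : MonotoneOn c (Set.Icc 1 n) := fun a ha b hb hab =>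
    mul_le_mul_of_nonneg_left (hdmono ha hb hab) hα.1.le
  set L := (⌊γ * (n : ℝ)⌋).toNat + 1 with hL
  have hNL : NN γ n m ≤ L := min_le_left _ _
  have hmem : ∀ l ∈ Finset.Icc 1 L, kk γ n m l ∈ Set.Icc 1 n := fun l hl =>
    kk_mem γ hγ n m l hn hmn (Finset.mem_Icc.1 hl).1
  have hβ : ∀ l ∈ Finset.Icc 1 L, 0 ≤ c (kk γ n m l) ∧ c (kk γ n m l) ≤ 1 := by
    intro l hl
    have hk := hmem l hl
    exact ⟨(mul_nonneg hα.1.le hd1).trans (hc ⟨le_rfl, hn⟩ hk hk.1),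
      (hc hk ⟨hn, le_rfl⟩ hk.2).trans hdn⟩
  -- Regrouping the row sum `(A d)_m` according to the fibres of `k_m`.
  have hsum : ∑ l ∈ Finset.Icc 1 L, Atilde γ n m l * c (kk γ n m l) ≤ α := by
    have h1 : ∑ l ∈ Finset.Icc 1 L, Atilde γ n m l * d (kk γ n m l)
        = ∑ j ∈ Finset.Icc 1 n, AFDPSD γ n m j * d j := by
      rw [← Finset.sum_fiberwise_of_maps_to (t := Finset.Icc 1 n) (g := kk γ n m)
        (fun l hl => Finset.mem_Icc.2 (hmem l hl))]
      refine Finset.sum_congr rfl fun j _ => ?_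
      rw [AFDPSD, Finset.sum_mul]
      refine Finset.sum_congr rfl fun l hl => ?_
      rw [(Finset.mem_filter.1 hl).2]
    calc ∑ l ∈ Finset.Icc 1 L, Atilde γ n m l * c (kk γ n m l)
        = α * ∑ l ∈ Finset.Icc 1 L, Atilde γ n m l * d (kk γ n m l) := by
          rw [Finset.mul_sum]
          exact Finset.sum_congr rfl fun l _ => by simp only [hcdef]; ring
      _ ≤ α * 1 := by
          rw [h1]
          exact mul_le_mul_of_nonneg_left (hA m (Finset.mem_Icc.2 ⟨hm1, hmn⟩)) hα.1.le
      _ = α := mul_one α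
  set E := {ω | γ < FDPSD n PV c I ω} with hE
  have hmarkov := outer_markov P (I ×ˢ Finset.Icc 1 L)
    (fun x => ENNReal.ofReal (Atilde γ n m x.2))
    (fun x => {ω | PV x.1 ω ≤ c (kk γ n m x.2)}) E (ENNReal.ofReal m) (by
      intro ω hω
      obtain ⟨l, hl1, hlN, hlv⟩ := exists_crossing n γ hγ c hc PV I hI ω hω
      have hl0 : (0 : ℝ) < l := by exact_mod_cast hl1
      set T := I.filter fun p => PV p ω ≤ c (kk γ n m l) with hT
      have hTsub : T ×ˢ Finset.Icc l (NN γ n m) ⊆ I ×ˢ Finset.Icc 1 L :=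
        Finset.product_subset_product (Finset.filter_subset _ _)
          (Finset.Icc_subset_Icc hl1 hNL)
      calc ENNReal.ofReal m
          ≤ ENNReal.ofReal (∑ x ∈ T ×ˢ Finset.Icc l (NN γ n m), Atilde γ n m x.2) := by
            apply ENNReal.ofReal_le_ofReal
            rw [Finset.sum_product]
            simp only [Finset.sum_const, nsmul_eq_mul]
            rw [sum_Atilde_tail γ n m l hl1 hlN]
            have : (l : ℝ) ≤ T.card := by exact_mod_cast hlv
            calc (m : ℝ) = l * (m / l) := by field_simp
              _ ≤ T.card * (m / l) := by gcongr
        _ = ∑ x ∈ T ×ˢ Finset.Icc l (NN γ n m), ENNReal.ofReal (Atilde γ n m x.2) :=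
            ENNReal.ofReal_sum_of_nonneg fun x _ => Atilde_nonneg γ n m x.2
        _ = ∑ x ∈ T ×ˢ Finset.Icc l (NN γ n m), ENNReal.ofReal (Atilde γ n m x.2) *
              {ω | PV x.1 ω ≤ c (kk γ n m x.2)}.indicator 1 ω := by
            refine Finset.sum_congr rfl fun x hx => ?_
            have hxL := hTsub hx
            rw [Finset.mem_product, Finset.mem_Icc] at hx
            have hle : PV x.1 ω ≤ c (kk γ n m x.2) :=
              (Finset.mem_filter.1 hx.1).2.trans
                (hc (kk_mem γ hγ n m l hn hmn hl1) (hmem _ (Finset.mem_product.1 hxL).2)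
                  (kk_mono γ hγ n m hx.2.1))
            rw [Set.indicator_of_mem (by exact hle), Pi.one_apply, mul_one]
        _ ≤ _ := Finset.sum_le_sum_of_subset hTsub)
  have hbound : ENNReal.ofReal m * P E ≤ ENNReal.ofReal m * ENNReal.ofReal α := by
    refine hmarkov.trans ?_
    calc ∑ x ∈ I ×ˢ Finset.Icc 1 L, ENNReal.ofReal (Atilde γ n m x.2) *
            P {ω | PV x.1 ω ≤ c (kk γ n m x.2)}
        ≤ ∑ x ∈ I ×ˢ Finset.Icc 1 L, ENNReal.ofReal (Atilde γ n m x.2 * c (kk γ n m x.2)) := by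
          refine Finset.sum_le_sum fun x hx => ?_
          rw [Finset.mem_product] at hx
          rw [ENNReal.ofReal_mul (Atilde_nonneg γ n m x.2)]
          gcongr
          exact null_Icc P (PV x.1) (hnull x.1 hx.1) _ (hβ x.2 hx.2).1 (hβ x.2 hx.2).2
      _ = ENNReal.ofReal (m * ∑ l ∈ Finset.Icc 1 L, Atilde γ n m l * c (kk γ n m l)) := by
          rw [← ENNReal.ofReal_sum_of_nonneg fun x hx =>
            mul_nonneg (Atilde_nonneg γ n m x.2) (hβ x.2 (Finset.mem_product.1 hx).2).1,
            Finset.sum_product]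
          simp only [Finset.sum_const, nsmul_eq_mul, hm]
      _ ≤ ENNReal.ofReal (m * α) := by gcongr
      _ = ENNReal.ofReal m * ENNReal.ofReal α := ENNReal.ofReal_mul (by positivity)
  have hm0 : (0 : ℝ) < m := by exact_mod_cast hm1
  exact (ENNReal.mul_le_mul_iff_right (ENNReal.ofReal_pos.2 hm0).ne' ENNReal.ofReal_ne_top).1 hbound

end GenError

end
end

section
/- Fix n ≥ 1, γ ∈ [0,1), a probability space (Ω, P), p-values PV_1, …, PV_n : Ω → [0,1], and a nonempty set I ⊆ {1,…,n} of true hypotheses. Let 0 ≤ c_1 ≤ ⋯ ≤ c_n ≤ 1 and consider the step-up procedure with these constants. Then, writing PV_(1) ≤ ⋯ ≤ PV_(|I|) for the ordered p-values of the true hypotheses, the event inclusion {FDP > γ} ⊆ ⋃_{k=1}^{M(|I|)} {PV_(k) ≤ c_{t_k(|I|)}} holds, where M and t_k are as in the definitions. -/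
/-! The step-up number of rejections `R` is exactly the number of p-values `≤ c R`: were there
`N > R` of them, then `N` of the p-values would be `≤ c R ≤ c N`, against the maximality of `R`.
Hence at most `n - |I|` of the `R` rejections are false hypotheses, so `V ≥ |I| - n + R`, while
`V / R > γ` gives `V ≥ m(R)`; together `V ≥ k` for `k = g_{|I|}(R)`. Since `m(R) ≤ V ≤ |I|`, we have
`R ≤ M̃(|I|)`, so `k ≤ M(|I|)` and `R ≤ t_k(|I|)`. Therefore at least `V ≥ k` true p-values are
`≤ c R ≤ c (t_k(|I|))`. -/

open MeasureTheory

noncomputable section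

namespace GenError

variable {Ω : Type*}

lemma numLe_mono (s : Finset ℕ) (PV : ℕ → Ω → ℝ) (ω : Ω) {x y : ℝ} (h : x ≤ y) :
    numLe s PV x ω ≤ numLe s PV y ω := by
  unfold numLe
  gcongr

/-- The number of rejections is admissible, and it equals the number of p-values that are at most
the critical constant in force. -/
lemma numRejSU_spec {n : ℕ} {PV : ℕ → Ω → ℝ} {c : ℕ → ℝ} {ω : Ω}
    (hc : MonotoneOn c (Set.Icc 1 n)) (h : numRejSU n PV c ω ≠ 0) :
    numRejSU n PV c ω ∈ Set.Icc 1 n ∧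
      numLe (Finset.Icc 1 n) PV (c (numRejSU n PV c ω)) ω = numRejSU n PV c ω := by
  set R := numRejSU n PV c ω with hR
  set F := (Finset.Icc 1 n).filter fun i => i ≤ numLe (Finset.Icc 1 n) PV (c i) ω with hF
  have hRF : R = F.sup id := rfl
  have hne : F.Nonempty := by
    by_contra hF0
    rw [Finset.not_nonempty_iff_eq_empty] at hF0
    simp [hRF, hF0] at h
  obtain ⟨r, hr, hr'⟩ := Finset.exists_mem_eq_sup F hne id
  have hRmem : R ∈ F := by rw [hRF, hr']; exact hr
  simp only [hF, Finset.mem_filter, Finset.mem_Icc] at hRmem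
  obtain ⟨⟨h1, h2⟩, h3⟩ := hRmem
  refine ⟨⟨h1, h2⟩, le_antisymm ?_ h3⟩
  set N := numLe (Finset.Icc 1 n) PV (c R) ω with hN
  have hNn : N ≤ n := by
    simpa [hN, numLe] using (Finset.card_filter_le (Finset.Icc 1 n) fun i => PV i ω ≤ c R)
  -- `N` is itself admissible in the maximum defining `R`.
  have hNF : N ∈ F := by
    simp only [hF, Finset.mem_filter, Finset.mem_Icc]
    exact ⟨⟨h1.trans h3, hNn⟩,
      numLe_mono _ _ _ (hc ⟨h1, h2⟩ ⟨h1.trans h3, hNn⟩ h3)⟩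
  exact Finset.le_sup (f := id) hNF

/-- Deleting the indices outside `I` removes at most `n - |I|` p-values from the count. -/
lemma numLe_Icc_le {n : ℕ} {I : Finset ℕ} (hI : I ⊆ Finset.Icc 1 n) (PV : ℕ → Ω → ℝ) (x : ℝ)
    (ω : Ω) : numLe (Finset.Icc 1 n) PV x ω + I.card ≤ numLe I PV x ω + n := by
  have h1 : (Finset.Icc 1 n).filter (fun i => PV i ω ≤ x) ⊆
      I.filter (fun i => PV i ω ≤ x) ∪ (Finset.Icc 1 n \ I) := by
    intro i hi
    simp only [Finset.mem_union, Finset.mem_filter, Finset.mem_sdiff] at hi ⊢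
    tauto
  have h2 := (Finset.card_le_card h1).trans (Finset.card_union_le _ _)
  have h3 := Finset.card_sdiff_add_card_eq_card hI
  simp only [Nat.card_Icc, Nat.add_sub_cancel] at h3
  unfold numLe
  omega

/-- A proportion `v / r > γ` forces `v ≥ m(r)`. -/
lemma mfl_le_of_lt_div {γ : ℝ} (hγ : 0 ≤ γ) {v r : ℕ} (hr : 0 < r)
    (h : γ < (v : ℝ) / (r : ℝ)) : mfl γ r ≤ v := by
  have hr' : (0 : ℝ) < r := by exact_mod_cast hr
  rw [lt_div_iff₀ hr'] at h
  have h0 : 0 ≤ ⌊γ * (r : ℝ)⌋ := Int.floor_nonneg.2 (by positivity)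
  have h1 : ⌊γ * (r : ℝ)⌋ < (v : ℤ) := Int.floor_lt.2 (by exact_mod_cast h)
  unfold mfl
  omega

/-- the event `{FDP > γ}` for the step-up procedure is contained in the union
`⋃_{k=1}^{M(|I|)} {PV_(k) ≤ c (t_k(|I|))}`, the order statistics being those of the
p-values of the true hypotheses. -/
theorem statement8 {Ω : Type*} [MeasurableSpace Ω] (P : Measure Ω) [IsProbabilityMeasure P]
    (n : ℕ) (hn : 1 ≤ n) (γ : ℝ) (hγ : γ ∈ Set.Ico (0 : ℝ) 1)
    (PV : ℕ → Ω → ℝ) (hPV : ∀ i ∈ Finset.Icc 1 n, ∀ ω, PV i ω ∈ Set.Icc (0 : ℝ) 1)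
    (I : Finset ℕ) (hI : I ⊆ Finset.Icc 1 n) (hIne : I.Nonempty)
    (c : ℕ → ℝ) (hc1 : 0 ≤ c 1) (hcmono : MonotoneOn c (Set.Icc 1 n)) (hcn : c n ≤ 1) :
    {ω | γ < FDPSU n PV c I ω} ⊆
      ⋃ k ∈ Finset.Icc 1 (MM γ n I.card),
        {ω | k ≤ numLe I PV (c (tt γ n I.card k)) ω} := by
  intro ω hω
  have hω' : γ < FDPSU n PV c I ω := hω
  have hR0 : numRejSU n PV c ω ≠ 0 := by
    intro h0
    simp only [FDPSU, h0, if_true] at hω'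
    exact absurd hγ.1 (not_le.2 hω')
  obtain ⟨⟨hR1, hRn⟩, hRN⟩ := numRejSU_spec hcmono hR0
  simp only [FDPSU, VSU, numFalse, hR0, if_false] at hω'
  set R := numRejSU n PV c ω
  have hmV : mfl γ R ≤ numLe I PV (c R) ω := mfl_le_of_lt_div hγ.1 hR1 hω'
  have hVI : numLe I PV (c R) ω ≤ I.card := Finset.card_filter_le _ _
  have hdel := numLe_Icc_le hI PV (c R) ω
  rw [hRN] at hdel
  have hgV : gg γ n I.card R ≤ numLe I PV (c R) ω := max_le (by omega) hmV
  have hRM : R ≤ Mt γ n I.card :=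
    Finset.le_sup (f := id) (Finset.mem_filter.2
      ⟨Finset.mem_Icc.2 ⟨hR1, hRn⟩, hmV.trans hVI⟩)
  have hMn : Mt γ n I.card ≤ n :=
    Finset.sup_le fun l hl => (Finset.mem_Icc.1 (Finset.mem_filter.1 hl).1).2
  have hRt : R ≤ tt γ n I.card (gg γ n I.card R) :=
    Finset.le_sup (f := id) (Finset.mem_filter.2 ⟨Finset.mem_Icc.2 ⟨hR1, hRM⟩, rfl⟩)
  have htn : tt γ n I.card (gg γ n I.card R) ≤ n :=
    (Finset.sup_le fun l hl => (Finset.mem_Icc.1 (Finset.mem_filter.1 hl).1).2).trans hMn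
  simp only [Set.mem_iUnion]
  refine ⟨gg γ n I.card R, Finset.mem_Icc.2 ⟨?_, gg_mono hγ.1 n _ hRM⟩, ?_⟩
  · exact (Nat.succ_le_succ (Nat.zero_le _)).trans (le_max_right _ (mfl γ R))
  · exact hgV.trans (numLe_mono _ _ _ (hcmono ⟨hR1, hRn⟩ ⟨hR1.trans hRt, htn⟩ hRt))

end GenError

end
end
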